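/- arXiv:2001.04676 — 2 statements merged into one kernel-verified Lean document; each statement's English description precedes it below -/
import Mathlib

section
/- Suppose there exists s ≥ 2 such that E[u(X, Z_1)^s] < ∞ and sup_{x,z} ‖g(x, z)/u(x, z)‖_∞ < ∞. Then there exists a constant c > 0 such that for every ℓ ≥ 0 the bias of the level-2^ℓ gradient estimator satisfies ‖E[Ĝ_{2^ℓ}] − E[G(X)]‖_2 ≤ c·2^{−αℓ}, where α = min(s/2, 1). -/
open MeasureTheory ProbabilityTheory Finset
open scoped ENNReal

noncomputable section

/-- Expectation (possibly vector-valued) of a functional `f` of a data point `x ~ ν`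
together with `n` samples drawn i.i.d. (conditionally on `x`) from the proposal kernel
`q`. -/
def jointExp {𝒳 𝒵 : Type*} [MeasurableSpace 𝒳] [MeasurableSpace 𝒵]
    {E : Type*} [NormedAddCommGroup E] [NormedSpace ℝ E]
    (ν : Measure 𝒳) (q : Kernel 𝒳 𝒵) (n : ℕ) (f : 𝒳 → (Fin n → 𝒵) → E) : E :=
  ∫ x, ∫ zs, f x zs ∂(Measure.pi fun _ : Fin n => q x) ∂ν

/-- The self-normalized (ratio) gradient estimator
`Ĝ = (∑ₖ g(x, zₖ)) / (∑ₖ u(x, zₖ))`. -/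
def ratioEstimator {𝒳 𝒵 E : Type*} [AddCommGroup E] [Module ℝ E]
    (u : 𝒳 → 𝒵 → ℝ) (g : 𝒳 → 𝒵 → E) {n : ℕ} (x : 𝒳) (zs : Fin n → 𝒵) : E :=
  (∑ k, u x (zs k))⁻¹ • ∑ k, g x (zs k)

/-!
Fix `x` and let `S = ∑ₖ u(x, zₖ)`, `R = Ĝₙ`, `m = ∫ g(x, z) q(dz; x)` and
`A = ∑ₖ (g(x, zₖ) - u(x, zₖ) m)`. Since `A = S (R - m)` and `n² = (S - n)² + 2 n S - S²`,
`n² (R - m) = (S - n)² (R - m) + 2 n A - S A`.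
The summands of `A` are centred, so `E[A] = 0` and `E[S A] = n E[u (g - u m)]` by independence,
while `R - m` is bounded and `E[(S - n)²] = n Var u`. Hence the right-hand side has expectation of
order `n E[u²]`, and the bias is of order `E[u²] / n`. All of this works for `g` with values in a
Banach space, and the case `s = 2` already gives the rate `1 / n`.
-/

theorem euclideanSpace_norm_le_sqrt_card_mul {ι : Type*} [Fintype ι] {v : EuclideanSpace ℝ ι}
    {B : ℝ} (hv : ∀ i, ‖v i‖ ≤ B) : ‖v‖ ≤ √(Fintype.card ι) * B := by
  rcases isEmpty_or_nonempty ι with hι | ⟨⟨i₀⟩⟩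
  · simp [EuclideanSpace.norm_eq]
  · have hB : 0 ≤ B := (norm_nonneg _).trans (hv i₀)
    calc ‖v‖ = √(∑ i, ‖v i‖ ^ 2) := EuclideanSpace.norm_eq v
      _ ≤ √(∑ _i : ι, B ^ 2) := by
        gcongr with i
        exact hv i
      _ = √(Fintype.card ι) * B := by
        rw [sum_const, card_univ, nsmul_eq_mul, Real.sqrt_mul (Nat.cast_nonneg _), Real.sqrt_sq hB]

theorem integrable_rpow_of_le {Ω : Type*} [MeasurableSpace Ω] {μ : Measure Ω} [IsFiniteMeasure μ]
    {f : Ω → ℝ} (hf : AEStronglyMeasurable f μ) (hf_nonneg : ∀ ω, 0 ≤ f ω) {p r : ℝ} (hp : 0 ≤ p)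
    (hpr : p ≤ r) (h_int : Integrable (fun ω => f ω ^ r) μ) : Integrable (fun ω => f ω ^ p) μ := by
  have h_norm (ω : Ω) : ‖f ω‖ = f ω := Real.norm_of_nonneg (hf_nonneg ω)
  simpa only [h_norm] using
    integrable_norm_rpow_of_le hf hp (hp.trans hpr) hpr (by simpa only [h_norm] using h_int)

theorem two_rpow_neg_min_one_mul {α : ℝ} (hα : 1 ≤ α) (ℓ : ℕ) :
    (2 : ℝ) ^ (-(min α 1) * ℓ) = ((2 ^ ℓ : ℕ) : ℝ)⁻¹ := by
  rw [min_eq_right hα, neg_one_mul, Real.rpow_neg zero_le_two, Real.rpow_natCast, Nat.cast_pow,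
    Nat.cast_ofNat]

section Pi

variable {ι : Type*} [Fintype ι] {Ω : ι → Type*} [∀ i, MeasurableSpace (Ω i)]

section IndependentSums

variable {E : Type*} [NormedAddCommGroup E] {μ : ∀ i, Measure (Ω i)}
  [∀ i, IsProbabilityMeasure (μ i)]

theorem memLp_sum_eval_pi {p : ℝ≥0∞} {f : ∀ i, Ω i → E} (hf : ∀ i, MemLp (f i) p (μ i)) :
    MemLp (fun ω => ∑ i, f i (ω i)) p (Measure.pi μ) :=
  memLp_finsetSum _ fun i _ => (hf i).comp_measurePreserving (measurePreserving_eval μ i)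

variable [NormedSpace ℝ E]

theorem integral_sum_eval_pi {f : ∀ i, Ω i → E} (hf : ∀ i, Integrable (f i) (μ i)) :
    ∫ ω, ∑ i, f i (ω i) ∂Measure.pi μ = ∑ i, ∫ z, f i z ∂μ i := by
  rw [integral_finsetSum _ fun i _ => integrable_comp_eval (hf i)]
  exact sum_congr rfl fun i _ => integral_comp_eval (hf i).1

theorem integral_eval_smul_eval_pi {f : ∀ i, Ω i → ℝ} {g : ∀ i, Ω i → E}
    (hf : ∀ i, AEStronglyMeasurable (f i) (μ i)) (hg : ∀ i, AEStronglyMeasurable (g i) (μ i))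
    {i j : ι} (hij : i ≠ j) :
    ∫ ω, f i (ω i) • g j (ω j) ∂Measure.pi μ = (∫ z, f i z ∂μ i) • ∫ z, g j z ∂μ j := by
  have h_indep : IndepFun (fun ω : ∀ i, Ω i => ω i) (fun ω => ω j) (Measure.pi μ) :=
    (iIndepFun_pi (X := fun _ => id) fun _ => aemeasurable_id).indepFun hij
  have h_map (k : ι) : (Measure.pi μ).map (fun ω => ω k) = μ k :=
    (measurePreserving_eval μ k).map_eq
  rw [h_indep.integral_fun_comp_smul_comp (measurable_pi_apply i).aemeasurable
    (measurable_pi_apply j).aemeasurable (by rw [h_map]; exact hf i) (by rw [h_map]; exact hg j),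
    integral_comp_eval (hf i), integral_comp_eval (hg j)]

theorem integral_sum_eval_smul_sum_eval_pi {f : ∀ i, Ω i → ℝ} {g : ∀ i, Ω i → E}
    (hf : ∀ i, MemLp (f i) 2 (μ i)) (hg : ∀ i, MemLp (g i) 2 (μ i))
    (hg_zero : ∀ i, ∫ z, g i z ∂μ i = 0) :
    ∫ ω, (∑ i, f i (ω i)) • ∑ j, g j (ω j) ∂Measure.pi μ = ∑ i, ∫ z, f i z • g i z ∂μ i := by
  classical
  have h_int (i j : ι) : Integrable (fun ω => f i (ω i) • g j (ω j)) (Measure.pi μ) :=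
    memLp_one_iff_integrable.1 <|
      ((hg j).comp_measurePreserving (measurePreserving_eval μ j)).smul
        ((hf i).comp_measurePreserving (measurePreserving_eval μ i))
  have h_term (i j : ι) : ∫ ω, f i (ω i) • g j (ω j) ∂Measure.pi μ =
      if i = j then ∫ z, f i z • g i z ∂μ i else 0 := by
    split_ifs with hij
    · subst hij
      exact integral_comp_eval (f := fun z => f i z • g i z) ((hf i).1.smul (hg i).1)
    · rw [integral_eval_smul_eval_pi (fun k => (hf k).1) (fun k => (hg k).1) hij, hg_zero,
        smul_zero]
  simp_rw [sum_smul_sum]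
  rw [integral_finsetSum _ fun i _ => integrable_finsetSum _ fun j _ => h_int i j]
  simp_rw [integral_finsetSum _ fun j _ => h_int _ j, h_term, sum_ite_eq, mem_univ, if_true]

theorem integral_sq_sum_eval_sub_sum_integral_le {f : ∀ i, Ω i → ℝ}
    (hf : ∀ i, MemLp (f i) 2 (μ i)) :
    ∫ ω, (∑ i, f i (ω i) - ∑ i, ∫ z, f i z ∂μ i) ^ 2 ∂Measure.pi μ ≤
      ∑ i, ∫ z, f i z ^ 2 ∂μ i := by
  have h_sum : (∑ i, fun ω : ∀ i, Ω i => f i (ω i)) = fun ω => ∑ i, f i (ω i) := by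
    ext ω
    exact sum_apply ω univ _
  calc ∫ ω, (∑ i, f i (ω i) - ∑ i, ∫ z, f i z ∂μ i) ^ 2 ∂Measure.pi μ
      = Var[∑ i, fun ω => f i (ω i); Measure.pi μ] := by
        rw [h_sum, variance_eq_integral (memLp_sum_eval_pi hf).1.aemeasurable,
          integral_sum_eval_pi fun i => (hf i).integrable one_le_two]
    _ = ∑ i, Var[f i; μ i] := variance_sum_pi hf
    _ ≤ ∑ i, ∫ z, f i z ^ 2 ∂μ i := sum_le_sum fun i _ => variance_le_expectation_sq (hf i).1

end IndependentSums

variable {𝒳 : Type*} [MeasurableSpace 𝒳]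

/-- The product of finitely many Markov kernels with the same source: conditionally on the source,
the coordinates are independent. For a constant family this is the law of the i.i.d. samples in
`jointExp`. -/
def piKernel (κ : ∀ i, Kernel 𝒳 (Ω i)) [∀ i, IsMarkovKernel (κ i)] : Kernel 𝒳 (∀ i, Ω i) where
  toFun x := Measure.pi fun i => κ i x
  measurable' := by
    refine Measurable.measure_of_isPiSystem_of_isProbabilityMeasure generateFrom_pi.symm
      isPiSystem_pi ?_
    rintro _ ⟨t, ht, rfl⟩
    simp only [Measure.pi_pi]
    exact univ.measurable_prod fun i _ => (κ i).measurable_coe (ht i (Set.mem_univ i))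

instance piKernel.isMarkovKernel (κ : ∀ i, Kernel 𝒳 (Ω i)) [∀ i, IsMarkovKernel (κ i)] :
    IsMarkovKernel (piKernel κ) :=
  ⟨fun x => inferInstanceAs (IsProbabilityMeasure (Measure.pi fun i => κ i x))⟩

end Pi

section RatioEstimator

variable {𝒳 𝒵 E : Type*} [NormedAddCommGroup E] [NormedSpace ℝ E]
  {u : 𝒳 → 𝒵 → ℝ} {g : 𝒳 → 𝒵 → E} {x : 𝒳} {C : ℝ} {n : ℕ}

section Pointwise

variable [NeZero n]

theorem sum_smul_ratioEstimator (hu_pos : ∀ z, 0 < u x z) (zs : Fin n → 𝒵) :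
    (∑ k, u x (zs k)) • ratioEstimator u g x zs = ∑ k, g x (zs k) :=
  smul_inv_smul₀ (sum_pos (fun k _ => hu_pos (zs k)) univ_nonempty).ne' _

theorem norm_ratioEstimator_le (hu_pos : ∀ z, 0 < u x z) (hgu : ∀ z, ‖g x z‖ ≤ C * u x z)
    (zs : Fin n → 𝒵) : ‖ratioEstimator u g x zs‖ ≤ C := by
  have hS : 0 < ∑ k, u x (zs k) := sum_pos (fun k _ => hu_pos (zs k)) univ_nonempty
  rw [ratioEstimator, norm_smul, norm_inv, Real.norm_of_nonneg hS.le, inv_mul_le_iff₀' hS, mul_sum]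
  exact norm_sum_le_of_le _ fun k _ => hgu (zs k)

theorem sq_smul_ratioEstimator_sub (hu_pos : ∀ z, 0 < u x z) (m : E) (zs : Fin n → 𝒵) :
    (n : ℝ) ^ 2 • (ratioEstimator u g x zs - m) =
      (∑ k, u x (zs k) - n) ^ 2 • (ratioEstimator u g x zs - m) +
        (2 * n : ℝ) • ∑ k, (g x (zs k) - u x (zs k) • m) -
        (∑ k, u x (zs k)) • ∑ k, (g x (zs k) - u x (zs k) • m) := by
  have hA : ∑ k, (g x (zs k) - u x (zs k) • m) =
      (∑ k, u x (zs k)) • (ratioEstimator u g x zs - m) := by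
    rw [sum_sub_distrib, ← sum_smul, smul_sub, sum_smul_ratioEstimator hu_pos]
  rw [hA]
  module

end Pointwise

theorem norm_sub_smul_le_of_norm_le_mul {m v : E} {r : ℝ} (hm : ‖m‖ ≤ C) (hr : 0 ≤ r)
    (hv : ‖v‖ ≤ C * r) : ‖v - r • m‖ ≤ 2 * C * r :=
  calc ‖v - r • m‖ ≤ ‖v‖ + ‖r • m‖ := norm_sub_le _ _
    _ ≤ C * r + r * C := by
      rw [norm_smul, Real.norm_of_nonneg hr]
      gcongr
    _ = 2 * C * r := by ring

section Integral

variable [MeasurableSpace 𝒵] {P : Measure 𝒵}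

theorem norm_integral_le_of_norm_le_mul {f : 𝒵 → E} {w : 𝒵 → ℝ} (hw_one : ∫ z, w z ∂P = 1)
    (hfw : ∀ z, ‖f z‖ ≤ C * w z) : ‖∫ z, f z ∂P‖ ≤ C := by
  have hw : Integrable w P := .of_integral_ne_zero (by simp [hw_one])
  calc ‖∫ z, f z ∂P‖ ≤ ∫ z, C * w z ∂P :=
        norm_integral_le_of_norm_le (hw.const_mul C) (ae_of_all _ hfw)
    _ = C := by rw [integral_const_mul, hw_one, mul_one]

theorem integral_sub_smul_integral_eq_zero [CompleteSpace E] {f : 𝒵 → E} {w : 𝒵 → ℝ}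
    (hf : Integrable f P) (hw_one : ∫ z, w z ∂P = 1) :
    ∫ z, (f z - w z • ∫ z', f z' ∂P) ∂P = 0 := by
  have hw : Integrable w P := .of_integral_ne_zero (by simp [hw_one])
  rw [integral_sub hf (hw.smul_const _), integral_smul_const, hw_one, one_smul, sub_self]

theorem norm_integral_smul_sub_smul_le {f : 𝒵 → E} {w : 𝒵 → ℝ} {m : E} (hm : ‖m‖ ≤ C)
    (hw_nonneg : ∀ z, 0 ≤ w z) (hw : MemLp w 2 P) (hfw : ∀ z, ‖f z‖ ≤ C * w z) :
    ‖∫ z, w z • (f z - w z • m) ∂P‖ ≤ 2 * C * ∫ z, w z ^ 2 ∂P := by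
  rw [← integral_const_mul]
  refine norm_integral_le_of_norm_le (hw.integrable_sq.const_mul _) <| ae_of_all _ fun z => ?_
  calc ‖w z • (f z - w z • m)‖ = w z * ‖f z - w z • m‖ := by
        rw [norm_smul, Real.norm_of_nonneg (hw_nonneg z)]
    _ ≤ w z * (2 * C * w z) :=
        mul_le_mul_of_nonneg_left (norm_sub_smul_le_of_norm_le_mul hm (hw_nonneg z) (hfw z))
          (hw_nonneg z)
    _ = 2 * C * w z ^ 2 := by ring

variable [IsProbabilityMeasure P]

theorem aestronglyMeasurable_ratioEstimator (hu : AEStronglyMeasurable (u x) P)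
    (hg : AEStronglyMeasurable (g x) P) :
    AEStronglyMeasurable (fun zs : Fin n → 𝒵 => ratioEstimator u g x zs)
      (Measure.pi fun _ => P) := by
  have h_eval (k : Fin n) := measurePreserving_eval (fun _ : Fin n => P) k
  have hS : AEStronglyMeasurable (fun zs : Fin n → 𝒵 => ∑ k, u x (zs k)) (Measure.pi fun _ => P) :=
    univ.aestronglyMeasurable_fun_sum fun k _ => hu.comp_measurePreserving (h_eval k)
  exact hS.aemeasurable.inv.aestronglyMeasurable.smul <|
    univ.aestronglyMeasurable_fun_sum fun k _ => hg.comp_measurePreserving (h_eval k)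

theorem integrable_ratioEstimator [NeZero n] (hu_pos : ∀ z, 0 < u x z)
    (hu : AEStronglyMeasurable (u x) P) (hg : AEStronglyMeasurable (g x) P)
    (hgu : ∀ z, ‖g x z‖ ≤ C * u x z) :
    Integrable (fun zs : Fin n → 𝒵 => ratioEstimator u g x zs) (Measure.pi fun _ => P) :=
  .of_bound (aestronglyMeasurable_ratioEstimator hu hg) C
    (ae_of_all _ (norm_ratioEstimator_le hu_pos hgu))

theorem integrable_sq_smul_ratioEstimator_sub [NeZero n] (m : E) (hu_pos : ∀ z, 0 < u x z)
    (hu : MemLp (u x) 2 P) (hg : AEStronglyMeasurable (g x) P) (hgu : ∀ z, ‖g x z‖ ≤ C * u x z) :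
    Integrable (fun zs => (∑ k, u x (zs k) - n) ^ 2 • (ratioEstimator u g x zs - m))
      (Measure.pi fun _ : Fin n => P) :=
  ((memLp_sum_eval_pi fun _ => hu).sub (memLp_const _)).integrable_sq.smul_bdd (C + ‖m‖)
    ((aestronglyMeasurable_ratioEstimator hu.1 hg).sub aestronglyMeasurable_const) <|
      ae_of_all _ fun zs => norm_sub_le_of_le (norm_ratioEstimator_le hu_pos hgu zs) le_rfl

theorem integral_sq_sum_sub_card_le {w : 𝒵 → ℝ} (hw : MemLp w 2 P) (hw_one : ∫ z, w z ∂P = 1) :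
    ∫ zs, (∑ k, w (zs k) - n) ^ 2 ∂(Measure.pi fun _ : Fin n => P) ≤ n * ∫ z, w z ^ 2 ∂P := by
  simpa [hw_one] using
    integral_sq_sum_eval_sub_sum_integral_le (μ := fun _ : Fin n => P) (f := fun _ => w) fun _ => hw

theorem norm_integral_sq_smul_ratioEstimator_sub_le [NeZero n] {m : E} (hm : ‖m‖ ≤ C)
    (hu_pos : ∀ z, 0 < u x z) (hu : MemLp (u x) 2 P) (hu_one : ∫ z, u x z ∂P = 1)
    (hgu : ∀ z, ‖g x z‖ ≤ C * u x z) :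
    ‖∫ zs, (∑ k, u x (zs k) - n) ^ 2 • (ratioEstimator u g x zs - m)
        ∂(Measure.pi fun _ : Fin n => P)‖ ≤ 2 * C * (n * ∫ z, u x z ^ 2 ∂P) := by
  set Q := Measure.pi fun _ : Fin n => P
  have hC : 0 ≤ C := (norm_nonneg m).trans hm
  have h_int : Integrable (fun zs : Fin n → 𝒵 => (∑ k, u x (zs k) - n) ^ 2) Q :=
    ((memLp_sum_eval_pi fun _ => hu).sub (memLp_const _)).integrable_sq
  have h_bound (zs : Fin n → 𝒵) :
      ‖(∑ k, u x (zs k) - n) ^ 2 • (ratioEstimator u g x zs - m)‖ ≤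
        2 * C * (∑ k, u x (zs k) - n) ^ 2 := by
    have hR : ‖ratioEstimator u g x zs - m‖ ≤ C + C :=
      norm_sub_le_of_le (norm_ratioEstimator_le hu_pos hgu zs) hm
    rw [norm_smul, Real.norm_of_nonneg (sq_nonneg _), mul_comm, two_mul]
    gcongr
  calc _ ≤ ∫ zs, 2 * C * (∑ k, u x (zs k) - n) ^ 2 ∂Q :=
        norm_integral_le_of_norm_le (h_int.const_mul _) (ae_of_all _ h_bound)
    _ ≤ 2 * C * (n * ∫ z, u x z ^ 2 ∂P) := by
        rw [integral_const_mul]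
        gcongr
        exact integral_sq_sum_sub_card_le hu hu_one

variable [CompleteSpace E] [NeZero n]

theorem sq_smul_integral_ratioEstimator_sub (hu_pos : ∀ z, 0 < u x z) (hu : MemLp (u x) 2 P)
    (hu_one : ∫ z, u x z ∂P = 1) (hg : AEStronglyMeasurable (g x) P)
    (hgu : ∀ z, ‖g x z‖ ≤ C * u x z) :
    (n : ℝ) ^ 2 •
        (∫ zs, ratioEstimator u g x zs ∂(Measure.pi fun _ : Fin n => P) - ∫ z, g x z ∂P) =
      ∫ zs, (∑ k, u x (zs k) - n) ^ 2 • (ratioEstimator u g x zs - ∫ z, g x z ∂P)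
          ∂(Measure.pi fun _ : Fin n => P) -
        (n : ℝ) • ∫ z, u x z • (g x z - u x z • ∫ z', g x z' ∂P) ∂P := by
  set m := ∫ z, g x z ∂P
  set Q := Measure.pi fun _ : Fin n => P
  set S : (Fin n → 𝒵) → ℝ := fun zs => ∑ k, u x (zs k)
  set R : (Fin n → 𝒵) → E := fun zs => ratioEstimator u g x zs
  set a : 𝒵 → E := fun z => g x z - u x z • m
  set A : (Fin n → 𝒵) → E := fun zs => ∑ k, a (zs k)
  have hg_memLp : MemLp (g x) 2 P :=
    hu.of_le_mul hg (ae_of_all _ fun z => by simpa [abs_of_pos (hu_pos z)] using hgu z)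
  have ha : MemLp a 2 P := hg_memLp.sub ((memLp_top_const m).smul hu)
  have ha_zero : ∫ z, a z ∂P = 0 :=
    integral_sub_smul_integral_eq_zero (hg_memLp.integrable one_le_two) hu_one
  have hS : MemLp S 2 Q := memLp_sum_eval_pi fun _ => hu
  have hA : MemLp A 2 Q := memLp_sum_eval_pi fun _ => ha
  have hR : Integrable R Q := integrable_ratioEstimator hu_pos hu.1 hg hgu
  have hA_zero : ∫ zs, (2 * n : ℝ) • A zs ∂Q = 0 := by
    simp [A, Q, integral_smul, integral_sum_eval_pi fun _ : Fin n => ha.integrable one_le_two,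
      ha_zero]
  have hSA : ∫ zs, S zs • A zs ∂Q = (n : ℝ) • ∫ z, u x z • a z ∂P := by
    simp [S, A, Q, integral_sum_eval_smul_sum_eval_pi (μ := fun _ : Fin n => P) (fun _ => hu)
      (fun _ => ha) (fun _ => ha_zero), Nat.cast_smul_eq_nsmul]
  have hSR_int : Integrable (fun zs => (S zs - n) ^ 2 • (R zs - m)) Q :=
    integrable_sq_smul_ratioEstimator_sub m hu_pos hu hg hgu
  have hA_int : Integrable (fun zs => (2 * n : ℝ) • A zs) Q := (hA.integrable one_le_two).smul _
  have hSA_int : Integrable (fun zs => S zs • A zs) Q := memLp_one_iff_integrable.1 (hA.smul hS)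
  calc (n : ℝ) ^ 2 • (∫ zs, R zs ∂Q - m)
      = ∫ zs, (n : ℝ) ^ 2 • (R zs - m) ∂Q := by
        rw [integral_smul, integral_sub hR (integrable_const m), integral_const, probReal_univ,
          one_smul]
    _ = ∫ zs, ((S zs - n) ^ 2 • (R zs - m) + (2 * n : ℝ) • A zs - S zs • A zs) ∂Q := by
        simp_rw [S, R, A, a, sq_smul_ratioEstimator_sub hu_pos m]
    _ = ∫ zs, (S zs - n) ^ 2 • (R zs - m) ∂Q - (n : ℝ) • ∫ z, u x z • a z ∂P := by
        rw [integral_sub (by exact hSR_int.add hA_int) hSA_int, integral_add hSR_int hA_int,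
          hA_zero, add_zero, hSA]

theorem norm_integral_ratioEstimator_sub_le (hu_pos : ∀ z, 0 < u x z) (hu : MemLp (u x) 2 P)
    (hu_one : ∫ z, u x z ∂P = 1) (hg : AEStronglyMeasurable (g x) P)
    (hgu : ∀ z, ‖g x z‖ ≤ C * u x z) :
    ‖∫ zs, ratioEstimator u g x zs ∂(Measure.pi fun _ : Fin n => P) - ∫ z, g x z ∂P‖ ≤
      4 * C * (∫ z, u x z ^ 2 ∂P) / n := by
  set m := ∫ z, g x z ∂P
  set M := ∫ z, u x z ^ 2 ∂P
  have hn : (0 : ℝ) < n := Nat.cast_pos.2 (NeZero.pos n)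
  have hm : ‖m‖ ≤ C := norm_integral_le_of_norm_le_mul hu_one hgu
  have h_cross : ‖(n : ℝ) • ∫ z, u x z • (g x z - u x z • m) ∂P‖ ≤ n * (2 * C * M) := by
    rw [norm_smul, Real.norm_natCast]
    gcongr
    exact norm_integral_smul_sub_smul_le hm (fun z => (hu_pos z).le) hu hgu
  have h_bias : (n : ℝ) ^ 2 * ‖∫ zs, ratioEstimator u g x zs ∂(Measure.pi fun _ : Fin n => P) - m‖ ≤
      4 * C * M * n :=
    calc _ = ‖(n : ℝ) ^ 2 •
          (∫ zs, ratioEstimator u g x zs ∂(Measure.pi fun _ : Fin n => P) - m)‖ := by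
          rw [norm_smul, Real.norm_of_nonneg (sq_nonneg _)]
      _ ≤ 2 * C * (n * M) + n * (2 * C * M) := by
          rw [sq_smul_integral_ratioEstimator_sub hu_pos hu hu_one hg hgu]
          exact norm_sub_le_of_le
            (norm_integral_sq_smul_ratioEstimator_sub_le hm hu_pos hu hu_one hgu) h_cross
      _ = 4 * C * M * n := by ring
  rw [le_div_iff₀ hn]
  exact le_of_mul_le_mul_right (by linarith) hn

end Integral

section Joint

variable [MeasurableSpace 𝒳] [MeasurableSpace 𝒵] {ν : Measure 𝒳} [IsFiniteMeasure ν]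
  {q : Kernel 𝒳 𝒵} [IsMarkovKernel q]

theorem stronglyMeasurable_ratioEstimator (hu : StronglyMeasurable (Function.uncurry u))
    (hg : StronglyMeasurable (Function.uncurry g)) :
    StronglyMeasurable fun p : 𝒳 × (Fin n → 𝒵) => ratioEstimator u g p.1 p.2 := by
  have h_eval (k : Fin n) : Measurable fun p : 𝒳 × (Fin n → 𝒵) => (p.1, p.2 k) := by fun_prop
  have hS : StronglyMeasurable fun p : 𝒳 × (Fin n → 𝒵) => ∑ k, u p.1 (p.2 k) :=
    univ.stronglyMeasurable_fun_sum fun k _ => hu.comp_measurable (h_eval k)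
  exact hS.measurable.inv.stronglyMeasurable.smul <|
    univ.stronglyMeasurable_fun_sum fun k _ => hg.comp_measurable (h_eval k)

theorem integrable_integral_ratioEstimator [NeZero n] (hu_pos : ∀ x z, 0 < u x z)
    (hu : StronglyMeasurable (Function.uncurry u)) (hg : StronglyMeasurable (Function.uncurry g))
    (hgu : ∀ x z, ‖g x z‖ ≤ C * u x z) :
    Integrable (fun x => ∫ zs, ratioEstimator u g x zs ∂(Measure.pi fun _ : Fin n => q x)) ν := by
  have h_joint : Integrable (fun p : 𝒳 × (Fin n → 𝒵) => ratioEstimator u g p.1 p.2)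
      (ν ⊗ₘ piKernel fun _ => q) :=
    .of_bound (stronglyMeasurable_ratioEstimator hu hg).aestronglyMeasurable C
      (ae_of_all _ fun p => norm_ratioEstimator_le (hu_pos p.1) (hgu p.1) p.2)
  exact h_joint.integral_compProd

end Joint
end RatioEstimator

theorem gradient_bias_decay_general {𝒳 𝒵 E : Type*} [MeasurableSpace 𝒳] [MeasurableSpace 𝒵]
    [NormedAddCommGroup E] [NormedSpace ℝ E] [CompleteSpace E]
    (ν : Measure 𝒳) [IsFiniteMeasure ν] (q : Kernel 𝒳 𝒵) [IsMarkovKernel q]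
    (u : 𝒳 → 𝒵 → ℝ) (hu_meas : Measurable (Function.uncurry u)) (hu_pos : ∀ x z, 0 < u x z)
    (hu_norm : ∀ᵐ x ∂ν, ∫ z, u x z ∂(q x) = 1)
    (g : 𝒳 → 𝒵 → E) (hg_meas : StronglyMeasurable (Function.uncurry g))
    (G : 𝒳 → E) (hG : ∀ᵐ x ∂ν, ∫ z, g x z ∂(q x) = G x)
    (hu_sq : Integrable (fun p : 𝒳 × 𝒵 => u p.1 p.2 ^ 2) (ν ⊗ₘ q))
    {C : ℝ} (hgu : ∀ x z, ‖g x z‖ ≤ C * u x z) (n : ℕ) [NeZero n] :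
    ‖jointExp ν q n (fun x zs => ratioEstimator u g x zs) - ∫ x, G x ∂ν‖ ≤
      4 * C * (∫ p, u p.1 p.2 ^ 2 ∂(ν ⊗ₘ q)) / n := by
  have hu : StronglyMeasurable (Function.uncurry u) := hu_meas.stronglyMeasurable
  have hu_memLp : MemLp (Function.uncurry u) 2 (ν ⊗ₘ q) :=
    (memLp_two_iff_integrable_sq hu.aestronglyMeasurable).2 hu_sq
  have h_bias : ∀ᵐ x ∂ν,
      ‖∫ zs, ratioEstimator u g x zs ∂(Measure.pi fun _ : Fin n => q x) - ∫ z, g x z ∂(q x)‖ ≤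
        4 * C * (∫ z, u x z ^ 2 ∂(q x)) / n := by
    filter_upwards [hu_norm, hu_sq.ae_of_compProd] with x hx_one hx_sq
    have hux : StronglyMeasurable (u x) := hu.comp_measurable measurable_prodMk_left
    have hgx : StronglyMeasurable (g x) := hg_meas.comp_measurable measurable_prodMk_left
    exact norm_integral_ratioEstimator_sub_le (hu_pos x)
      ((memLp_two_iff_integrable_sq hux.aestronglyMeasurable).2 hx_sq) hx_one
      hgx.aestronglyMeasurable (hgu x)
  have hR := integrable_integral_ratioEstimator (ν := ν) (q := q) (n := n) hu_pos hu hg_meas hgu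
  have hg_int : Integrable (Function.uncurry g) (ν ⊗ₘ q) :=
    ((hu_memLp.integrable one_le_two).const_mul C).mono' hg_meas.aestronglyMeasurable
      (ae_of_all _ fun p => hgu p.1 p.2)
  have hg : Integrable (fun x => ∫ z, g x z ∂(q x)) ν := hg_int.integral_compProd
  rw [jointExp, ← integral_congr_ae hG, ← integral_sub hR hg, Measure.integral_compProd hu_sq,
    ← integral_const_mul, ← integral_div]
  exact norm_integral_le_of_norm_le ((hu_sq.integral_compProd.const_mul _).div_const _) h_bias

/-- **Bias decay of the self-normalized gradient estimator** (Theorem 3 of the paper).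
Let `X ~ ν` and, conditionally on `X`, `Z₁, Z₂, …` i.i.d. `~ q(·; X)`; let `u > 0` be the
normalized importance weight (`∫ u q(dz;x) = 1` a.e.) and `g` the weighted gradient with
`∫ g q(dz;x) = G(x)` a.e.  If `E[u^s] < ∞` for some `s ≥ 2` and
`sup_{x,z} ‖g(x,z)/u(x,z)‖_∞ < ∞`, then the level-`2^ℓ` ratio estimator
`Ĝ_{2^ℓ} = (∑ₖ g(X,Zₖ))/(∑ₖ u(X,Zₖ))` satisfies
`‖E[Ĝ_{2^ℓ}] − E[G(X)]‖₂ ≤ c·2^{−αℓ}` with `α = min(s/2, 1)`. -/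
theorem gradient_bias_decay
    {𝒳 𝒵 : Type*} [MeasurableSpace 𝒳] [MeasurableSpace 𝒵] {d : ℕ}
    (ν : Measure 𝒳) [IsProbabilityMeasure ν]
    (q : Kernel 𝒳 𝒵) [IsMarkovKernel q]
    (u : 𝒳 → 𝒵 → ℝ) (hu_meas : Measurable (Function.uncurry u))
    (hu_pos : ∀ x z, 0 < u x z)
    (hu_norm : ∀ᵐ x ∂ν, ∫ z, u x z ∂(q x) = 1)
    (g : 𝒳 → 𝒵 → EuclideanSpace ℝ (Fin d)) (hg_meas : Measurable (Function.uncurry g))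
    (G : 𝒳 → EuclideanSpace ℝ (Fin d))
    (hG : ∀ᵐ x ∂ν, ∫ z, g x z ∂(q x) = G x)
    (s : ℝ) (hs : 2 ≤ s)
    (hus : Integrable (fun p : 𝒳 × 𝒵 => u p.1 p.2 ^ s) (ν ⊗ₘ q))
    (hsup : ∃ Csup : ℝ, ∀ x z i, |g x z i / u x z| ≤ Csup) :
    ∃ c > (0 : ℝ), ∀ ℓ : ℕ,
      ‖jointExp ν q (2 ^ ℓ) (fun x zs => ratioEstimator u g x zs) - ∫ x, G x ∂ν‖
        ≤ c * (2 : ℝ) ^ (-(min (s / 2) 1) * ℓ) := by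
  obtain ⟨Csup, hCsup⟩ := hsup
  have hgu (x z) : ‖g x z‖ ≤ √d * Csup * u x z := by
    have hg_coord (i) : ‖g x z i‖ ≤ Csup * u x z := by
      rw [← div_le_iff₀ (hu_pos x z)]
      simpa [abs_div, abs_of_pos (hu_pos x z)] using hCsup x z i
    simpa [mul_assoc] using euclideanSpace_norm_le_sqrt_card_mul hg_coord
  have hu_sq : Integrable (fun p : 𝒳 × 𝒵 => u p.1 p.2 ^ 2) (ν ⊗ₘ q) := by
    simpa only [Real.rpow_two, Function.uncurry] using integrable_rpow_of_le
      hu_meas.aestronglyMeasurable (fun p => (hu_pos p.1 p.2).le) zero_le_two hs hus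
  refine ⟨max (4 * (√d * Csup) * ∫ p, u p.1 p.2 ^ 2 ∂(ν ⊗ₘ q)) 1, by positivity, fun ℓ => ?_⟩
  rw [two_rpow_neg_min_one_mul (by linarith), ← div_eq_mul_inv]
  refine (gradient_bias_decay_general ν q u hu_meas hu_pos hu_norm g hg_meas.stronglyMeasurable G hG
    hu_sq hgu (2 ^ ℓ)).trans ?_
  gcongr
  exact le_max_left _ _
end
end

section
/- Suppose there exists s ≥ 2 such that E[u(Θ, X, Z_1)^s] < ∞ and sup_{θ,x,z} ‖g(θ, x, z)/u(θ, x, z)‖_∞ < ∞. Then there exists a constant c > 0 such that for every ℓ ≥ 1 the coupled level-ℓ gradient correction satisfies E[‖∇Δ_ℓ − E[∇Δ_ℓ]‖_2²] ≤ c·2^{−βℓ} with β = min(s/2, 2), and for every ℓ ≥ 0 the bias satisfies ‖E[Ĝ_{2^ℓ}] − E[G(Θ, X)]‖_2 ≤ c·2^{−αℓ} with α = min(s/2, 1). -/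
open MeasureTheory ProbabilityTheory Finset
open scoped ENNReal

noncomputable section

/-- Vector-valued expectation of a functional `f` of a global parameter `θ ~ r`, a data
point `x ~ ν` (independent of `θ`), and `n` samples drawn i.i.d. (conditionally on `x`)
from the proposal kernel `q`. -/
def jointExp3 {Θ 𝒳 𝒵 : Type*} [MeasurableSpace Θ] [MeasurableSpace 𝒳] [MeasurableSpace 𝒵]
    {E : Type*} [NormedAddCommGroup E] [NormedSpace ℝ E]
    (r : Measure Θ) (ν : Measure 𝒳) (q : Kernel 𝒳 𝒵) (n : ℕ)
    (f : Θ → 𝒳 → (Fin n → 𝒵) → E) : E :=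
  ∫ θ, ∫ x, ∫ zs, f θ x zs ∂(Measure.pi fun _ : Fin n => q x) ∂ν ∂r

/-- The self-normalized (ratio) gradient estimator
`Ĝ = (∑ₖ g(θ, x, zₖ)) / (∑ₖ u(θ, x, zₖ))`. -/
def ratioEstimator3 {Θ 𝒳 𝒵 E : Type*} [AddCommGroup E] [Module ℝ E]
    (u : Θ → 𝒳 → 𝒵 → ℝ) (g : Θ → 𝒳 → 𝒵 → E) {n : ℕ} (θ : Θ) (x : 𝒳)
    (zs : Fin n → 𝒵) : E :=
  (∑ k, u θ x (zs k))⁻¹ • ∑ k, g θ x (zs k)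

/-- The coupled level gradient correction `∇Δ = Ĝ_{2n} − ½(Ĝₙ⁽ᵃ⁾ + Ĝₙ⁽ᵇ⁾)` formed from all
`2n` samples, the first `n` samples and the last `n` samples respectively. -/
def gradCorrection3 {Θ 𝒳 𝒵 E : Type*} [AddCommGroup E] [Module ℝ E]
    (u : Θ → 𝒳 → 𝒵 → ℝ) (g : Θ → 𝒳 → 𝒵 → E) (n : ℕ) (θ : Θ) (x : 𝒳)
    (zs : Fin (2 * n) → 𝒵) : E :=
  ratioEstimator3 u g θ x zs
    - (2 : ℝ)⁻¹ • (ratioEstimator3 u g θ x (fun k : Fin n => zs ⟨k.1, by have := k.2; omega⟩)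
        + ratioEstimator3 u g θ x (fun k : Fin n => zs ⟨n + k.1, by have := k.2; omega⟩))

/-!
Divide numerator and denominator of the ratio by the number of samples, and let `Ū` and `R` be the
means of the weights `u` and of the residuals `g - u • G`. Then `Ĝ - G = Ū⁻¹ • R`, whose linear part
`R` has mean zero and cancels in the coupled correction, being linear in the samples. What remains
is `((1 - Ū) / Ū) • R`. As `‖R‖ ≤ 2 * C * Ū`, this remainder is bounded by a multiple of
`max ‖R‖ |1 - Ū|`, and also by a multiple of its square; hence its `q`-th power is bounded by a
multiple of the `p`-th power of the maximum for every `p` between `q` and `2 * q`. The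
Marcinkiewicz–Zygmund inequality bounds the `p`-th moments of `R` and `1 - Ū` by a multiple of
`n ^ (-p / 2)`. The bias uses `q = 1`, `p = 2` and the variance `q = 2`, `p = min s 4`.

The Marcinkiewicz–Zygmund inequality follows by adding the `n` independent summands one at a time:
in the bound of `‖a + b‖ ^ p` by
`(1 + c / n) * ‖a‖ ^ p + p * ⟪‖a‖ ^ (p - 2) • a, b⟫ + c * n ^ (p / 2 - 1) * ‖b‖ ^ p`
the linear term has mean zero, and `(1 + c / n) ^ n ≤ exp c`.
-/

section SelfNormalizedMean

/-- The arithmetic mean `|ι|⁻¹ ∑ᵢ f i` of a finite family of vectors. -/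
def sampleMean {ι E : Type*} [Fintype ι] [AddCommGroup E] [Module ℝ E] (f : ι → E) : E :=
  (Fintype.card ι : ℝ)⁻¹ • ∑ i, f i

/-- The self-normalized mean `(∑ᵢ u i)⁻¹ ∑ᵢ g i` of vectors `g i` with weights `u i` already
multiplied in, so that `ratioEstimator3` is a self-normalized mean over the drawn samples. -/
def selfNormalizedMean {ι E : Type*} [Fintype ι] [AddCommGroup E] [Module ℝ E]
    (u : ι → ℝ) (g : ι → E) : E :=
  (∑ i, u i)⁻¹ • ∑ i, g i

/-- The remainder of the first-order expansion of the self-normalized mean around weights of mean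
`1` and vectors of mean `G`: the linear part is the mean of the residuals `g i - u i • G`. -/
def linearizationError {ι E : Type*} [Fintype ι] [AddCommGroup E] [Module ℝ E]
    (u : ι → ℝ) (g : ι → E) (G : E) : E :=
  selfNormalizedMean u g - G - sampleMean fun i => g i - u i • G

section Algebra

variable {ι E : Type*} [Fintype ι] [AddCommGroup E] [Module ℝ E]

lemma sampleMean_sub_smul (u : ι → ℝ) (g : ι → E) (G : E) :
    sampleMean (fun i => g i - u i • G) = sampleMean g - sampleMean u • G := by
  simp only [sampleMean, Finset.sum_sub_distrib, smul_sub, Finset.sum_smul, smul_eq_mul, mul_smul]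

lemma sampleMean_one_sub [Nonempty ι] (u : ι → ℝ) :
    sampleMean (fun i => 1 - u i) = 1 - sampleMean u := by
  simp [sampleMean, Finset.sum_sub_distrib, mul_sub]

lemma selfNormalizedMean_eq_inv_smul (u : ι → ℝ) (g : ι → E) :
    selfNormalizedMean u g = (sampleMean u)⁻¹ • sampleMean g := by
  rcases isEmpty_or_nonempty ι
  · simp [selfNormalizedMean, sampleMean]
  · simp only [selfNormalizedMean, sampleMean, smul_smul, smul_eq_mul, mul_inv, inv_inv]
    congr 1
    field_simp

lemma linearizationError_eq_smul (u : ι → ℝ) (g : ι → E) (G : E) (hu : sampleMean u ≠ 0) :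
    linearizationError u g G =
      ((1 - sampleMean u) / sampleMean u) • sampleMean fun i => g i - u i • G := by
  rw [linearizationError, selfNormalizedMean_eq_inv_smul, sampleMean_sub_smul, sub_div,
    div_self hu, one_div]
  match_scalars
  · ring
  · field_simp
    ring

end Algebra

variable {ι E : Type*} [Fintype ι] [NormedAddCommGroup E] [NormedSpace ℝ E]

lemma norm_sampleMean_le {f : ι → E} {b : ι → ℝ} (h : ∀ i, ‖f i‖ ≤ b i) :
    ‖sampleMean f‖ ≤ sampleMean b := by
  rw [sampleMean, norm_smul, Real.norm_of_nonneg (by positivity)]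
  exact mul_le_mul_of_nonneg_left (norm_sum_le_of_le _ fun i _ => h i) (by positivity)

lemma sampleMean_pos [Nonempty ι] {u : ι → ℝ} (hu : ∀ i, 0 < u i) : 0 < sampleMean u :=
  mul_pos (inv_pos.2 (Nat.cast_pos.2 Fintype.card_pos))
    (Finset.sum_pos (fun i _ => hu i) Finset.univ_nonempty)

lemma norm_selfNormalizedMean_le {u : ι → ℝ} {g : ι → E} {C : ℝ} (hC : 0 ≤ C)
    (hu : ∀ i, 0 ≤ u i) (hg : ∀ i, ‖g i‖ ≤ C * u i) : ‖selfNormalizedMean u g‖ ≤ C := by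
  have hsum : 0 ≤ ∑ i, u i := Finset.sum_nonneg fun i _ => hu i
  rw [selfNormalizedMean, norm_smul, Real.norm_of_nonneg (inv_nonneg.2 hsum), inv_mul_eq_div]
  refine div_le_of_le_mul₀ hsum hC ((norm_sum_le_of_le _ fun i _ => hg i).trans_eq ?_)
  rw [Finset.mul_sum]

lemma norm_sub_smul_le {u C : ℝ} {g G : E} (hu : 0 ≤ u) (hg : ‖g‖ ≤ C * u) (hG : ‖G‖ ≤ C) :
    ‖g - u • G‖ ≤ 2 * C * u :=
  calc ‖g - u • G‖ ≤ ‖g‖ + u * ‖G‖ := by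
        rw [← Real.norm_of_nonneg hu, ← norm_smul, Real.norm_of_nonneg hu]
        exact norm_sub_le _ _
    _ ≤ C * u + u * C := by gcongr
    _ = 2 * C * u := by ring

lemma rpow_le_mul_rpow_of_le_of_le_sq {x c M q p : ℝ} (hx : 0 ≤ x) (hc : 0 ≤ c) (hM : 0 ≤ M)
    (hq : 0 < q) (hqp : q ≤ p) (hpq : p ≤ 2 * q) (linear : x ≤ c * M) (quadratic : x ≤ c * M ^ 2) :
    x ^ q ≤ c ^ q * M ^ p := by
  rcases le_total 1 M with h1 | h1
  · calc x ^ q ≤ (c * M) ^ q := by gcongr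
      _ = c ^ q * M ^ q := Real.mul_rpow hc hM
      _ ≤ c ^ q * M ^ p := by gcongr
  · calc x ^ q ≤ (c * M ^ 2) ^ q := by gcongr
      _ = c ^ q * M ^ (2 * q) := by
        rw [Real.mul_rpow hc (by positivity), ← Real.rpow_natCast_mul hM, Nat.cast_ofNat]
      _ ≤ c ^ q * M ^ p := by
        gcongr ?_ * ?_
        exact Real.rpow_le_rpow_of_exponent_ge' hM h1 (by linarith) hpq

lemma abs_one_sub_div_mul_le {H U B : ℝ} (hU : 0 < U) (hHU : H ≤ B * U) :
    |1 - U| / U * H ≤ B * |1 - U| := by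
  rw [div_mul_eq_mul_div, div_le_iff₀ hU]
  nlinarith [abs_nonneg (1 - U)]

-- Away from `0` the denominator is harmless; near `0`, `|1 - U|` is bounded below.
lemma abs_one_sub_div_mul_le_mul_max_sq {H U B : ℝ} (hH : 0 ≤ H) (hU : 0 < U) (hHU : H ≤ B * U) :
    |1 - U| / U * H ≤ 2 * (1 + B) * max H |1 - U| ^ 2 := by
  set V := |1 - U| with hV
  have hV0 : 0 ≤ V := abs_nonneg _
  have hB : 0 ≤ B := nonneg_of_mul_nonneg_left (hH.trans hHU) hU
  rcases le_total (1 / 2) U with large | small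
  · have ratio_le : V / U ≤ 2 * V := by
      rw [div_le_iff₀ hU]
      nlinarith
    calc V / U * H ≤ 2 * V * H := by gcongr
      _ ≤ 2 * max H V * max H V := by
        gcongr
        exacts [le_max_right H V, le_max_left H V]
      _ ≤ 2 * (1 + B) * max H V ^ 2 := by nlinarith [mul_nonneg hB (sq_nonneg (max H V))]
  · have half_le : 1 / 2 ≤ V := by
      rw [hV, abs_of_nonneg (by linarith)]
      linarith
    calc V / U * H ≤ B * V := abs_one_sub_div_mul_le hU hHU
      _ ≤ B * (2 * V ^ 2) := by
        gcongr
        nlinarith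
      _ ≤ B * (2 * max H V ^ 2) := by
        gcongr
        exact le_max_right H V
      _ ≤ 2 * (1 + B) * max H V ^ 2 := by nlinarith [sq_nonneg (max H V)]

lemma abs_one_sub_div_mul_rpow_le {H U B q p : ℝ} (hH : 0 ≤ H) (hU : 0 < U) (hHU : H ≤ B * U)
    (hq : 0 < q) (hqp : q ≤ p) (hpq : p ≤ 2 * q) :
    (|1 - U| / U * H) ^ q ≤ (2 * (1 + B)) ^ q * (H ^ p + |1 - U| ^ p) := by
  set V := |1 - U|
  have hB : 0 ≤ B := nonneg_of_mul_nonneg_left (hH.trans hHU) hU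
  have hM : 0 ≤ max H V := le_max_of_le_left hH
  have linear : V / U * H ≤ 2 * (1 + B) * max H V := by
    nlinarith [abs_one_sub_div_mul_le hU hHU, le_max_right H V]
  calc (V / U * H) ^ q ≤ (2 * (1 + B)) ^ q * max H V ^ p :=
        rpow_le_mul_rpow_of_le_of_le_sq (by positivity) (by positivity) hM hq hqp hpq linear
          (abs_one_sub_div_mul_le_mul_max_sq hH hU hHU)
    _ ≤ (2 * (1 + B)) ^ q * (H ^ p + V ^ p) := by
        gcongr
        rcases max_choice H V with h | h <;> rw [h]
        · exact le_add_of_nonneg_right (by positivity)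
        · exact le_add_of_nonneg_left (by positivity)

theorem norm_linearizationError_rpow_le [Nonempty ι] {u : ι → ℝ} {g : ι → E} {G : E} {C q p : ℝ}
    (hu : ∀ i, 0 < u i) (hg : ∀ i, ‖g i‖ ≤ C * u i) (hG : ‖G‖ ≤ C) (hq : 0 < q) (hqp : q ≤ p)
    (hpq : p ≤ 2 * q) :
    ‖linearizationError u g G‖ ^ q ≤ (2 * (1 + 2 * C)) ^ q *
      (‖sampleMean fun i => g i - u i • G‖ ^ p + ‖sampleMean fun i => 1 - u i‖ ^ p) := by
  have hU := sampleMean_pos hu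
  have residual_le : ‖sampleMean fun i => g i - u i • G‖ ≤ 2 * C * sampleMean u := by
    refine (norm_sampleMean_le fun i => norm_sub_smul_le (hu i).le (hg i) hG).trans_eq ?_
    simp only [sampleMean, ← Finset.mul_sum, smul_eq_mul]
    ring
  rw [linearizationError_eq_smul u g G hU.ne', norm_smul, norm_div, Real.norm_of_nonneg hU.le,
    sampleMean_one_sub, Real.norm_eq_abs]
  exact abs_one_sub_div_mul_rpow_le (norm_nonneg _) hU residual_le hq hqp hpq

end SelfNormalizedMean

section CoupledCorrection

/-- The position in `Fin (2 * n)` of the `k`-th index of the first half. -/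
def firstHalf (n : ℕ) (k : Fin n) : Fin (2 * n) := ⟨k.1, by have := k.2; omega⟩

/-- The position in `Fin (2 * n)` of the `k`-th index of the second half. -/
def secondHalf (n : ℕ) (k : Fin n) : Fin (2 * n) := ⟨n + k.1, by have := k.2; omega⟩

lemma firstHalf_injective (n : ℕ) : Function.Injective (firstHalf n) := fun i j h => by
  simpa [firstHalf, Fin.ext_iff] using h

lemma secondHalf_injective (n : ℕ) : Function.Injective (secondHalf n) := fun i j h => by
  simpa [secondHalf, Fin.ext_iff] using h

lemma sum_eq_sum_firstHalf_add_sum_secondHalf {M : Type*} [AddCommMonoid M] {n : ℕ}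
    (f : Fin (2 * n) → M) :
    ∑ i, f i = ∑ k, f (firstHalf n k) + ∑ k, f (secondHalf n k) := by
  rw [← (finCongr (two_mul n).symm).sum_comp f, Fin.sum_univ_add]
  rfl

/-- The difference between the self-normalized mean of `2 * n` weighted vectors and the average of
those of the two halves; `gradCorrection3` is its value at the drawn samples. -/
def coupledCorrection {E : Type*} [AddCommGroup E] [Module ℝ E] {n : ℕ} (u : Fin (2 * n) → ℝ)
    (g : Fin (2 * n) → E) : E :=
  selfNormalizedMean u g - (2 : ℝ)⁻¹ • (selfNormalizedMean (u ∘ firstHalf n) (g ∘ firstHalf n) +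
    selfNormalizedMean (u ∘ secondHalf n) (g ∘ secondHalf n))

lemma sampleMean_eq_half_smul_add {E : Type*} [AddCommGroup E] [Module ℝ E] {n : ℕ}
    (f : Fin (2 * n) → E) :
    sampleMean f = (2 : ℝ)⁻¹ • (sampleMean (f ∘ firstHalf n) + sampleMean (f ∘ secondHalf n)) := by
  simp only [sampleMean, Fintype.card_fin, sum_eq_sum_firstHalf_add_sum_secondHalf f, smul_add,
    smul_smul, Nat.cast_mul, Nat.cast_ofNat, mul_inv, Function.comp_apply]

lemma coupledCorrection_eq_linearizationError {E : Type*} [AddCommGroup E] [Module ℝ E] {n : ℕ}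
    (u : Fin (2 * n) → ℝ) (g : Fin (2 * n) → E) (G : E) :
    coupledCorrection u g = linearizationError u g G -
      (2 : ℝ)⁻¹ • (linearizationError (u ∘ firstHalf n) (g ∘ firstHalf n) G +
        linearizationError (u ∘ secondHalf n) (g ∘ secondHalf n) G) := by
  have linear_part := sampleMean_eq_half_smul_add fun i => g i - u i • G
  simp only [coupledCorrection, linearizationError, linear_part, Function.comp_def]
  module

variable {E : Type*} [NormedAddCommGroup E] [NormedSpace ℝ E]

lemma norm_sub_half_smul_add_sq_le (a b c : E) :
    ‖a - (2 : ℝ)⁻¹ • (b + c)‖ ^ 2 ≤ 2 * ‖a‖ ^ 2 + (‖b‖ ^ 2 + ‖c‖ ^ 2) := by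
  have triangle : ‖a - (2 : ℝ)⁻¹ • (b + c)‖ ≤ ‖a‖ + 2⁻¹ * (‖b‖ + ‖c‖) := by
    refine (norm_sub_le _ _).trans ?_
    rw [norm_smul, Real.norm_of_nonneg (by positivity)]
    gcongr
    exact norm_add_le b c
  calc _ ≤ (‖a‖ + 2⁻¹ * (‖b‖ + ‖c‖)) ^ 2 := by gcongr
    _ ≤ _ := by nlinarith [sq_nonneg (‖a‖ - 2⁻¹ * (‖b‖ + ‖c‖)), sq_nonneg (‖b‖ - ‖c‖)]

lemma norm_coupledCorrection_le {n : ℕ} {u : Fin (2 * n) → ℝ} {g : Fin (2 * n) → E} {C : ℝ}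
    (hC : 0 ≤ C) (hu : ∀ i, 0 ≤ u i) (hg : ∀ i, ‖g i‖ ≤ C * u i) :
    ‖coupledCorrection u g‖ ≤ 2 * C := by
  have half_le (h : Fin n → Fin (2 * n)) : ‖selfNormalizedMean (u ∘ h) (g ∘ h)‖ ≤ C :=
    norm_selfNormalizedMean_le hC (fun k => hu (h k)) fun k => hg (h k)
  calc _ ≤ C + 2⁻¹ * (C + C) := by
        refine norm_sub_le_of_le (norm_selfNormalizedMean_le hC hu hg) ?_
        rw [norm_smul, Real.norm_of_nonneg (by positivity)]
        gcongr
        exact norm_add_le_of_le (half_le _) (half_le _)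
    _ = 2 * C := by ring

end CoupledCorrection

section NormRpow

lemma rpow_sub_two_mul_sq {x p : ℝ} (hx : 0 ≤ x) (hp : p ≠ 0) : x ^ (p - 2) * x ^ 2 = x ^ p := by
  have := Real.rpow_add_natCast' (y := p - 2) (n := 2) hx (by simpa using hp)
  rw [← this]
  norm_num

lemma mul_rpow_sub_one_mul_le {t s p : ℝ} (ht : 0 ≤ t) (hs : 0 ≤ s) (hp : 1 ≤ p) :
    p * (t ^ (p - 1) * s) ≤ (p - 1) * t ^ p + s ^ p := by
  have hp0 : 0 < p := by linarith
  have amgm := Real.geom_mean_le_arith_mean2_weighted (w₁ := (p - 1) / p) (w₂ := 1 / p)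
    (div_nonneg (by linarith) hp0.le) (by positivity) (Real.rpow_nonneg ht p)
    (Real.rpow_nonneg hs p) (by field_simp; ring)
  rw [← Real.rpow_mul ht, ← Real.rpow_mul hs, mul_div_cancel₀ _ hp0.ne',
    mul_one_div_cancel hp0.ne', Real.rpow_one] at amgm
  calc p * (t ^ (p - 1) * s) ≤ p * ((p - 1) / p * t ^ p + 1 / p * s ^ p) := by gcongr
    _ = (p - 1) * t ^ p + s ^ p := by field_simp

lemma add_rpow_sub_two_mul_sq_le {x y K p : ℝ} (hx : 0 ≤ x) (hy : 0 ≤ y) (hK : 1 ≤ K)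
    (hp : 2 ≤ p) :
    (x + y) ^ (p - 2) * y ^ 2 ≤ 2 ^ (p - 2) * (x ^ p / K + K ^ (p / 2 - 1) * y ^ p) := by
  have hp0 : p ≠ 0 := by linarith
  have rpow_sub_two {w : ℝ} (hw : 0 ≤ w) : w ^ (p - 2) = (w ^ 2) ^ (p / 2 - 1) := by
    rw [← Real.rpow_natCast_mul hw]
    congr 1
    push_cast
    ring
  rw [mul_add]
  rcases le_total (K * y ^ 2) (x ^ 2) with small | large
  · have hyx : y ≤ x := by
      refine (pow_le_pow_iff_left₀ hy hx two_ne_zero).1 (le_trans ?_ small)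
      exact le_mul_of_one_le_left (sq_nonneg y) hK
    refine le_add_of_le_of_nonneg ?_ (by positivity)
    calc (x + y) ^ (p - 2) * y ^ 2 ≤ (2 * x) ^ (p - 2) * (x ^ 2 / K) := by
          gcongr
          · linarith
          · rwa [le_div_iff₀' (by linarith)]
      _ = 2 ^ (p - 2) * (x ^ p / K) := by
          rw [Real.mul_rpow zero_le_two hx, ← rpow_sub_two_mul_sq hx hp0]
          ring
  · have hxy : (x + y) ^ 2 ≤ 2 ^ 2 * K * y ^ 2 := by nlinarith [sq_nonneg (x - y), sq_nonneg y]
    refine le_add_of_nonneg_of_le (by positivity) ?_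
    calc (x + y) ^ (p - 2) * y ^ 2 ≤ (2 ^ 2 * K * y ^ 2) ^ (p / 2 - 1) * y ^ 2 := by
          rw [rpow_sub_two (by positivity)]
          gcongr
          linarith
      _ = 2 ^ (p - 2) * (K ^ (p / 2 - 1) * y ^ p) := by
          rw [Real.mul_rpow (by positivity) (by positivity), Real.mul_rpow (by positivity)
            (by positivity), ← rpow_sub_two hy, ← rpow_sub_two zero_le_two,
            ← rpow_sub_two_mul_sq hy hp0]
          ring

variable {E : Type*} [NormedAddCommGroup E] [InnerProductSpace ℝ E]

lemma norm_rpow_le_add_inner (x a : E) {p : ℝ} (hp : 1 ≤ p) :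
    ‖x‖ ^ p ≤ ‖a‖ ^ p + p * inner ℝ (‖x‖ ^ (p - 2) • x) (x - a) := by
  have self : inner ℝ (‖x‖ ^ (p - 2) • x) x = ‖x‖ ^ p := by
    rw [real_inner_smul_left, real_inner_self_eq_norm_sq, rpow_sub_two_mul_sq (norm_nonneg x)]
    linarith
  have cross : inner ℝ (‖x‖ ^ (p - 2) • x) a ≤ ‖x‖ ^ (p - 1) * ‖a‖ := by
    rcases eq_or_ne x 0 with rfl | hx
    · rw [smul_zero, inner_zero_left]
      positivity
    · refine (real_inner_le_norm _ _).trans_eq ?_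
      rw [norm_smul, Real.norm_of_nonneg (by positivity),
        ← Real.rpow_add_one (norm_ne_zero_iff.2 hx)]
      ring_nf
  have young := mul_rpow_sub_one_mul_le (norm_nonneg x) (norm_nonneg a) hp
  rw [inner_sub_right, self]
  nlinarith

lemma norm_rpow_smul_sub_rpow_smul_le (x y : E) {α : ℝ} (hα : 0 ≤ α) :
    ‖‖x‖ ^ α • x - ‖y‖ ^ α • y‖ ≤ (α + 2) * max ‖x‖ ‖y‖ ^ α * ‖x - y‖ := by
  wlog hyx : ‖y‖ ≤ ‖x‖ generalizing x y
  · rw [norm_sub_rev, max_comm, norm_sub_rev x]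
    exact this y x (le_of_not_ge hyx)
  have hpow : ‖y‖ ^ α ≤ ‖x‖ ^ α := by gcongr
  have scalar : (‖x‖ ^ α - ‖y‖ ^ α) * ‖y‖ ≤ (α + 1) * ‖x‖ ^ α * (‖x‖ - ‖y‖) := by
    have young := mul_rpow_sub_one_mul_le (norm_nonneg x) (norm_nonneg y) (p := α + 1) (by linarith)
    simp only [add_sub_cancel_right, Real.rpow_add_one' (norm_nonneg _) (by linarith : α + 1 ≠ 0)]
      at young
    have := mul_le_mul_of_nonneg_left hyx (Real.rpow_nonneg (norm_nonneg x) α)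
    linarith
  calc ‖‖x‖ ^ α • x - ‖y‖ ^ α • y‖ = ‖‖x‖ ^ α • (x - y) + (‖x‖ ^ α - ‖y‖ ^ α) • y‖ := by
        congr 1; module
    _ ≤ ‖x‖ ^ α * ‖x - y‖ + (‖x‖ ^ α - ‖y‖ ^ α) * ‖y‖ := by
        refine (norm_add_le _ _).trans_eq ?_
        rw [norm_smul, norm_smul, Real.norm_of_nonneg (by positivity),
          Real.norm_of_nonneg (sub_nonneg.2 hpow)]
    _ ≤ ‖x‖ ^ α * ‖x - y‖ + (α + 1) * ‖x‖ ^ α * ‖x - y‖ := by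
        refine add_le_add_right (scalar.trans ?_) _
        gcongr
        exact norm_sub_norm_le x y
    _ = (α + 2) * max ‖x‖ ‖y‖ ^ α * ‖x - y‖ := by rw [max_eq_left hyx]; ring

lemma norm_add_rpow_le_add_inner_add (a b : E) {p : ℝ} (hp : 2 ≤ p) :
    ‖a + b‖ ^ p ≤ ‖a‖ ^ p + p * inner ℝ (‖a‖ ^ (p - 2) • a) b
      + p ^ 2 * ((‖a‖ + ‖b‖) ^ (p - 2) * ‖b‖ ^ 2) := by
  have convex := norm_rpow_le_add_inner (a + b) a (p := p) (by linarith)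
  rw [add_sub_cancel_left] at convex
  have lipschitz : inner ℝ (‖a + b‖ ^ (p - 2) • (a + b) - ‖a‖ ^ (p - 2) • a) b
      ≤ p * ((‖a‖ + ‖b‖) ^ (p - 2) * ‖b‖ ^ 2) :=
    calc _ ≤ ‖‖a + b‖ ^ (p - 2) • (a + b) - ‖a‖ ^ (p - 2) • a‖ * ‖b‖ := real_inner_le_norm _ _
      _ ≤ (p - 2 + 2) * max ‖a + b‖ ‖a‖ ^ (p - 2) * ‖a + b - a‖ * ‖b‖ := by
        gcongr
        exact norm_rpow_smul_sub_rpow_smul_le _ _ (by linarith)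
      _ ≤ (p - 2 + 2) * (‖a‖ + ‖b‖) ^ (p - 2) * ‖a + b - a‖ * ‖b‖ := by
        gcongr
        exact max_le (norm_add_le a b) (by simp)
      _ = p * ((‖a‖ + ‖b‖) ^ (p - 2) * ‖b‖ ^ 2) := by rw [add_sub_cancel_left]; ring
  rw [inner_sub_left] at lipschitz
  nlinarith

lemma norm_add_rpow_le (a b : E) {p K : ℝ} (hp : 2 ≤ p) (hK : 1 ≤ K) :
    ‖a + b‖ ^ p ≤ (1 + p ^ 2 * 2 ^ (p - 2) / K) * ‖a‖ ^ p + p * inner ℝ (‖a‖ ^ (p - 2) • a) b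
      + p ^ 2 * 2 ^ (p - 2) * K ^ (p / 2 - 1) * ‖b‖ ^ p := by
  have taylor := norm_add_rpow_le_add_inner_add a b hp
  have split := mul_le_mul_of_nonneg_left
    (add_rpow_sub_two_mul_sq_le (norm_nonneg a) (norm_nonneg b) hK hp) (sq_nonneg p)
  linear_combination taylor + split

end NormRpow

section MarcinkiewiczZygmund

variable {Ω E : Type*} [MeasurableSpace Ω] {μ : Measure Ω} [NormedAddCommGroup E] {p : ℝ}

lemma memLp_ofReal_iff_integrable_norm_rpow {f : Ω → E}
    (hf : AEStronglyMeasurable f μ) (hp : 0 < p) :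
    MemLp f (ENNReal.ofReal p) μ ↔ Integrable (fun ω => ‖f ω‖ ^ p) μ := by
  rw [← integrable_norm_rpow_iff hf (by simpa using hp) ENNReal.ofReal_ne_top,
    ENNReal.toReal_ofReal hp.le]

lemma integrable_norm_rpow_sub_two_smul [IsFiniteMeasure μ] [NormedSpace ℝ E] [MeasurableSpace E]
    [BorelSpace E] [SecondCountableTopology E] {S : Ω → E} (hp : 2 ≤ p)
    (hS : MemLp S (ENNReal.ofReal p) μ) : Integrable (fun ω => ‖S ω‖ ^ (p - 2) • S ω) μ := by
  have hmeas : Measurable fun x : E => ‖x‖ ^ (p - 2) • x :=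
    (measurable_norm.pow_const _).smul measurable_id
  have hmono : MemLp S (ENNReal.ofReal (p - 1)) μ :=
    hS.mono_exponent (ENNReal.ofReal_le_ofReal (by linarith))
  refine ((memLp_ofReal_iff_integrable_norm_rpow hS.1 (by linarith)).1 hmono).mono'
    (hmeas.comp_aemeasurable hS.1.aemeasurable).aestronglyMeasurable (ae_of_all _ fun ω => ?_)
  rw [norm_smul, Real.norm_of_nonneg (by positivity),
    ← Real.rpow_add_one' (norm_nonneg _) (by linarith)]
  ring_nf
  exact le_rfl

variable [IsProbabilityMeasure μ] [InnerProductSpace ℝ E] [CompleteSpace E] [MeasurableSpace E]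
  [BorelSpace E] [SecondCountableTopology E]

lemma integral_norm_add_rpow_le {S Y : Ω → E} {K : ℝ} (hp : 2 ≤ p) (hK : 1 ≤ K)
    (hSY : IndepFun S Y μ) (hS : MemLp S (ENNReal.ofReal p) μ) (hY : MemLp Y (ENNReal.ofReal p) μ)
    (hY0 : μ[Y] = 0) :
    ∫ ω, ‖S ω + Y ω‖ ^ p ∂μ ≤ (1 + p ^ 2 * 2 ^ (p - 2) / K) * ∫ ω, ‖S ω‖ ^ p ∂μ
      + p ^ 2 * 2 ^ (p - 2) * K ^ (p / 2 - 1) * ∫ ω, ‖Y ω‖ ^ p ∂μ := by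
  have hp0 : 0 < p := by linarith
  have hint := integrable_norm_rpow_sub_two_smul hp hS
  have hYint : Integrable Y μ := hY.integrable (by simpa using one_le_two.trans hp)
  have hindep : IndepFun (fun ω => ‖S ω‖ ^ (p - 2) • S ω) Y μ :=
    hSY.comp ((measurable_norm.pow_const (p - 2)).smul measurable_id) measurable_id
  have cross_int : Integrable (fun ω => inner ℝ (‖S ω‖ ^ (p - 2) • S ω) (Y ω)) μ :=
    hindep.integrable_bilin hint hYint (innerSL ℝ)
  have cross_zero : ∫ ω, inner ℝ (‖S ω‖ ^ (p - 2) • S ω) (Y ω) ∂μ = 0 :=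
    (hindep.integral_bilin hint hYint (innerSL ℝ)).trans (by rw [hY0, map_zero])
  have hSp := ((memLp_ofReal_iff_integrable_norm_rpow hS.1 hp0).1 hS).const_mul
    (1 + p ^ 2 * 2 ^ (p - 2) / K)
  have hYp := ((memLp_ofReal_iff_integrable_norm_rpow hY.1 hp0).1 hY).const_mul
    (p ^ 2 * 2 ^ (p - 2) * K ^ (p / 2 - 1))
  have hSYp := (memLp_ofReal_iff_integrable_norm_rpow (hS.add hY).1 hp0).1 (hS.add hY)
  calc _ ≤ ∫ ω, ((1 + p ^ 2 * 2 ^ (p - 2) / K) * ‖S ω‖ ^ p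
          + p * inner ℝ (‖S ω‖ ^ (p - 2) • S ω) (Y ω)
          + p ^ 2 * 2 ^ (p - 2) * K ^ (p / 2 - 1) * ‖Y ω‖ ^ p) ∂μ :=
        integral_mono hSYp ((hSp.fun_add (cross_int.const_mul p)).fun_add hYp)
          fun ω => norm_add_rpow_le (S ω) (Y ω) hp hK
    _ = _ := by
        rw [integral_add (hSp.fun_add (cross_int.const_mul p)) hYp,
          integral_add hSp (cross_int.const_mul p)]
        simp only [integral_const_mul, cross_zero, mul_zero, add_zero]

variable {ι : Type*} {Y : ι → Ω → E}

lemma integral_norm_sum_rpow_le_pow_card (hp : 2 ≤ p) {K : ℝ} (hK : 1 ≤ K) (hY : iIndepFun Y μ)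
    (hmeas : ∀ i, Measurable (Y i)) (hLp : ∀ i, MemLp (Y i) (ENNReal.ofReal p) μ)
    (hY0 : ∀ i, μ[Y i] = 0) (s : Finset ι) :
    ∫ ω, ‖∑ i ∈ s, Y i ω‖ ^ p ∂μ ≤ (1 + p ^ 2 * 2 ^ (p - 2) / K) ^ #s *
      (p ^ 2 * 2 ^ (p - 2) * K ^ (p / 2 - 1)) * ∑ i ∈ s, ∫ ω, ‖Y i ω‖ ^ p ∂μ := by
  classical
  set b := 1 + p ^ 2 * 2 ^ (p - 2) / K
  set a := p ^ 2 * 2 ^ (p - 2) * K ^ (p / 2 - 1)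
  have hb : 1 ≤ b := le_add_of_nonneg_right (by positivity)
  induction s using Finset.induction_on with
  | empty => simp [Real.zero_rpow (by linarith : p ≠ 0)]
  | insert i s hi ih =>
    have hindep : IndepFun (fun ω => ∑ j ∈ s, Y j ω) (Y i) μ := by
      simpa only [← Finset.sum_apply] using hY.indepFun_finsetSum_of_notMem hmeas hi
    have last_summand := integral_norm_add_rpow_le hp hK hindep
      (memLp_finsetSum s fun j _ => hLp j) (hLp i) (hY0 i)
    have hpow : 1 ≤ b ^ (#s + 1) := one_le_pow₀ hb
    simp only [Finset.sum_insert hi, Finset.card_insert_of_notMem hi, add_comm (Y i _)]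
    calc _ ≤ b * ∫ ω, ‖∑ j ∈ s, Y j ω‖ ^ p ∂μ + a * ∫ ω, ‖Y i ω‖ ^ p ∂μ := last_summand
      _ ≤ b * (b ^ #s * a * ∑ j ∈ s, ∫ ω, ‖Y j ω‖ ^ p ∂μ)
          + b ^ (#s + 1) * (a * ∫ ω, ‖Y i ω‖ ^ p ∂μ) :=
        add_le_add (by gcongr) (le_mul_of_one_le_left (by positivity) hpow)
      _ = _ := by ring

/-- The constant `c eᶜ`, `c = p² 2ᵖ⁻²`, in the Marcinkiewicz–Zygmund inequality of exponent
`p ≥ 2`. -/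
def marcinkiewiczZygmundConst (p : ℝ) : ℝ :=
  p ^ 2 * 2 ^ (p - 2) * Real.exp (p ^ 2 * 2 ^ (p - 2))

lemma marcinkiewiczZygmundConst_nonneg (p : ℝ) : 0 ≤ marcinkiewiczZygmundConst p := by
  unfold marcinkiewiczZygmundConst
  positivity

theorem integral_norm_sum_rpow_le (hp : 2 ≤ p) (hY : iIndepFun Y μ)
    (hmeas : ∀ i, Measurable (Y i)) (hLp : ∀ i, MemLp (Y i) (ENNReal.ofReal p) μ)
    (hY0 : ∀ i, μ[Y i] = 0) (s : Finset ι) :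
    ∫ ω, ‖∑ i ∈ s, Y i ω‖ ^ p ∂μ ≤
      marcinkiewiczZygmundConst p * (#s : ℝ) ^ (p / 2 - 1) * ∑ i ∈ s, ∫ ω, ‖Y i ω‖ ^ p ∂μ := by
  rcases s.eq_empty_or_nonempty with rfl | hs
  · simp [Real.zero_rpow (by linarith : p ≠ 0)]
  have hcard : (1 : ℝ) ≤ #s := by exact_mod_cast hs.card_pos
  -- The choice `K = #s` keeps the accumulated factor `(1 + c / K) ^ #s` below `exp c`.
  have hexp : (1 + p ^ 2 * 2 ^ (p - 2) / #s) ^ #s ≤ Real.exp (p ^ 2 * 2 ^ (p - 2)) := by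
    calc _ ≤ Real.exp (p ^ 2 * 2 ^ (p - 2) / #s) ^ #s := by
          gcongr
          rw [add_comm]
          exact Real.add_one_le_exp _
      _ = Real.exp (p ^ 2 * 2 ^ (p - 2)) := by
          rw [← Real.exp_nat_mul, mul_div_cancel₀ _ (by positivity)]
  calc _ ≤ _ := integral_norm_sum_rpow_le_pow_card hp hcard hY hmeas hLp hY0 s
    _ ≤ Real.exp (p ^ 2 * 2 ^ (p - 2)) * (p ^ 2 * 2 ^ (p - 2) * (#s : ℝ) ^ (p / 2 - 1)) *
        ∑ i ∈ s, ∫ ω, ‖Y i ω‖ ^ p ∂μ := by gcongr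
    _ = _ := by
        unfold marcinkiewiczZygmundConst
        ring

theorem integral_norm_sampleMean_rpow_le [Fintype ι] [Nonempty ι] (hp : 2 ≤ p) (hY : iIndepFun Y μ)
    (hmeas : ∀ i, Measurable (Y i)) (hLp : ∀ i, MemLp (Y i) (ENNReal.ofReal p) μ)
    (hY0 : ∀ i, μ[Y i] = 0) {B : ℝ} (hB : ∀ i, ∫ ω, ‖Y i ω‖ ^ p ∂μ ≤ B) :
    ∫ ω, ‖sampleMean fun i => Y i ω‖ ^ p ∂μ ≤
      marcinkiewiczZygmundConst p * (Fintype.card ι : ℝ) ^ (-(p / 2)) * B := by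
  set n : ℝ := (Fintype.card ι : ℝ)
  have hn : 0 < n := Nat.cast_pos.2 Fintype.card_pos
  have hmz := integral_norm_sum_rpow_le hp hY hmeas hLp hY0 Finset.univ
  have hmzc := marcinkiewiczZygmundConst_nonneg p
  calc _ = (n⁻¹) ^ p * ∫ ω, ‖∑ i, Y i ω‖ ^ p ∂μ := by
        rw [← integral_const_mul]
        congr 1 with ω
        rw [sampleMean, norm_smul, Real.norm_of_nonneg (by positivity),
          Real.mul_rpow (by positivity) (norm_nonneg _)]
    _ ≤ (n⁻¹) ^ p * (marcinkiewiczZygmundConst p * n ^ (p / 2 - 1) * ∑ _i : ι, B) := by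
        gcongr
        refine hmz.trans ?_
        rw [Finset.card_univ]
        gcongr
        exact hB _
    _ = _ := by
        rw [Finset.sum_const, Finset.card_univ, nsmul_eq_mul, Real.inv_rpow hn.le,
          ← Real.rpow_neg hn.le, Real.rpow_sub_one hn.ne']
        have : n ^ (-(p / 2)) = n ^ (-p) * n ^ (p / 2) := by
          rw [← Real.rpow_add hn]
          ring_nf
        rw [this]
        field_simp
        ring

end MarcinkiewiczZygmund

section WeightedSample

lemma integral_norm_sub_half_smul_add_sq_le {Ω E : Type*} [MeasurableSpace Ω]
    {μ : Measure Ω} [NormedAddCommGroup E] [NormedSpace ℝ E] {a b c : Ω → E} {A : ℝ}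
    (ha : Integrable (fun ω => ‖a ω‖ ^ 2) μ) (hb : Integrable (fun ω => ‖b ω‖ ^ 2) μ)
    (hc : Integrable (fun ω => ‖c ω‖ ^ 2) μ) (haA : ∫ ω, ‖a ω‖ ^ 2 ∂μ ≤ A)
    (hbA : ∫ ω, ‖b ω‖ ^ 2 ∂μ ≤ A) (hcA : ∫ ω, ‖c ω‖ ^ 2 ∂μ ≤ A) :
    ∫ ω, ‖a ω - (2 : ℝ)⁻¹ • (b ω + c ω)‖ ^ 2 ∂μ ≤ 4 * A :=
  calc _ ≤ ∫ ω, (2 * ‖a ω‖ ^ 2 + (‖b ω‖ ^ 2 + ‖c ω‖ ^ 2)) ∂μ :=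
        integral_mono_of_nonneg (ae_of_all _ fun ω => by positivity)
          ((ha.const_mul 2).fun_add (hb.fun_add hc))
          (ae_of_all _ fun ω => norm_sub_half_smul_add_sq_le _ _ _)
    _ = 2 * ∫ ω, ‖a ω‖ ^ 2 ∂μ + (∫ ω, ‖b ω‖ ^ 2 ∂μ + ∫ ω, ‖c ω‖ ^ 2 ∂μ) := by
        rw [integral_add (ha.const_mul 2) (hb.fun_add hc), integral_const_mul, integral_add hb hc]
    _ ≤ 4 * A := by linarith

variable {Ω ι E : Type*} [MeasurableSpace Ω] {μ : Measure Ω} [NormedAddCommGroup E]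
  [NormedSpace ℝ E] [MeasurableSpace E]

/-- Independent, not necessarily identically distributed, pairs of a positive random weight `U i`
of mean `1` and a random vector `g i` of mean `G` that is bounded by `C` times its weight. -/
structure IsWeightedSample (μ : Measure Ω) (U : ι → Ω → ℝ) (g : ι → Ω → E) (G : E) (C : ℝ) :
    Prop where
  indep : iIndepFun (fun i ω => (U i ω, g i ω)) μ
  measurable_weight : ∀ i, Measurable (U i)
  measurable_vector : ∀ i, Measurable (g i)
  weight_pos : ∀ i ω, 0 < U i ω
  norm_le : ∀ i ω, ‖g i ω‖ ≤ C * U i ω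
  integral_weight : ∀ i, ∫ ω, U i ω ∂μ = 1
  integral_vector : ∀ i, ∫ ω, g i ω ∂μ = G

lemma isWeightedSample_pi [Fintype ι] {𝒵 : Type*} [MeasurableSpace 𝒵] {Q : Measure 𝒵}
    [IsProbabilityMeasure Q] [BorelSpace E] [SecondCountableTopology E] {u : 𝒵 → ℝ} {g : 𝒵 → E}
    {G : E} {C : ℝ} (hu : Measurable u) (hg : Measurable g) (hpos : ∀ z, 0 < u z)
    (hC : ∀ z, ‖g z‖ ≤ C * u z) (hu1 : ∫ z, u z ∂Q = 1) (hG : ∫ z, g z ∂Q = G) :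
    IsWeightedSample (Measure.pi fun _ : ι => Q) (fun i zs => u (zs i)) (fun i zs => g (zs i))
      G C where
  indep := iIndepFun_pi (X := fun _ z => (u z, g z)) fun _ => (hu.prodMk hg).aemeasurable
  measurable_weight i := hu.comp (measurable_pi_apply i)
  measurable_vector i := hg.comp (measurable_pi_apply i)
  weight_pos i zs := hpos (zs i)
  norm_le i zs := hC (zs i)
  integral_weight _ := (integral_comp_eval hu.aestronglyMeasurable).trans hu1
  integral_vector _ := (integral_comp_eval hg.aestronglyMeasurable).trans hG

namespace IsWeightedSample

variable {U : ι → Ω → ℝ} {g : ι → Ω → E} {G : E} {C p q B : ℝ}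

lemma precomp {κ : Type*} (h : IsWeightedSample μ U g G C) {σ : κ → ι}
    (hσ : Function.Injective σ) :
    IsWeightedSample μ (fun k => U (σ k)) (fun k => g (σ k)) G C where
  indep := h.indep.precomp hσ
  measurable_weight k := h.measurable_weight (σ k)
  measurable_vector k := h.measurable_vector (σ k)
  weight_pos k := h.weight_pos (σ k)
  norm_le k := h.norm_le (σ k)
  integral_weight k := h.integral_weight (σ k)
  integral_vector k := h.integral_vector (σ k)

lemma integrable_weight (h : IsWeightedSample μ U g G C) (i : ι) : Integrable (U i) μ :=
  integrable_of_integral_eq_one (h.integral_weight i)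

lemma norm_mean_le [Nonempty ι] (h : IsWeightedSample μ U g G C) : ‖G‖ ≤ C := by
  obtain ⟨i⟩ := ‹Nonempty ι›
  rw [← h.integral_vector i]
  refine (norm_integral_le_of_norm_le ((h.integrable_weight i).const_mul C)
    (ae_of_all _ (h.norm_le i))).trans_eq ?_
  rw [integral_const_mul, h.integral_weight, mul_one]

lemma norm_residual_le (h : IsWeightedSample μ U g G C) (i : ι) (ω : Ω) :
    ‖g i ω - U i ω • G‖ ≤ 2 * C * U i ω :=
  have : Nonempty ι := ⟨i⟩
  norm_sub_smul_le (h.weight_pos i ω).le (h.norm_le i ω) h.norm_mean_le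

lemma integral_one_sub_weight [IsProbabilityMeasure μ] (h : IsWeightedSample μ U g G C) (i : ι) :
    ∫ ω, (1 - U i ω) ∂μ = 0 := by
  rw [integral_sub (integrable_const 1) (h.integrable_weight i), h.integral_weight]
  simp

lemma integrable_vector [BorelSpace E] [SecondCountableTopology E]
    (h : IsWeightedSample μ U g G C) (i : ι) : Integrable (g i) μ :=
  ((h.integrable_weight i).const_mul C).mono' (h.measurable_vector i).aestronglyMeasurable
    (ae_of_all _ (h.norm_le i))

lemma integral_residual [BorelSpace E] [SecondCountableTopology E] [CompleteSpace E]
    (h : IsWeightedSample μ U g G C) (i : ι) : ∫ ω, (g i ω - U i ω • G) ∂μ = 0 := by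
  rw [integral_sub (h.integrable_vector i) ((h.integrable_weight i).smul_const G),
    integral_smul_const, h.integral_vector, h.integral_weight, one_smul, sub_self]

lemma measurable_linearizationError [Fintype ι] [BorelSpace E] [SecondCountableTopology E]
    (h : IsWeightedSample μ U g G C) :
    Measurable fun ω => linearizationError (U · ω) (g · ω) G := by
  have := h.measurable_weight
  have := h.measurable_vector
  unfold linearizationError selfNormalizedMean sampleMean
  fun_prop

lemma sampleMean_comp_moment [IsProbabilityMeasure μ] [Fintype ι] [Nonempty ι] {F : Type*}
    [NormedAddCommGroup F] [InnerProductSpace ℝ F]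
    [CompleteSpace F] [MeasurableSpace F] [BorelSpace F] [SecondCountableTopology F]
    (h : IsWeightedSample μ U g G C) (hp : 2 ≤ p) (hint : ∀ i, Integrable (fun ω => U i ω ^ p) μ)
    (hB : ∀ i, ∫ ω, U i ω ^ p ∂μ ≤ B) {φ : ℝ × E → F} (hφ : Measurable φ) {A : ℝ} (hA : 0 ≤ A)
    (hφA : ∀ i ω, ‖φ (U i ω, g i ω)‖ ^ p ≤ A * (1 + U i ω ^ p))
    (hφ0 : ∀ i, ∫ ω, φ (U i ω, g i ω) ∂μ = 0) :
    Integrable (fun ω => ‖sampleMean fun i => φ (U i ω, g i ω)‖ ^ p) μ ∧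
      ∫ ω, ‖sampleMean fun i => φ (U i ω, g i ω)‖ ^ p ∂μ ≤
        marcinkiewiczZygmundConst p * (Fintype.card ι : ℝ) ^ (-(p / 2)) * (A * (1 + B)) := by
  have hp0 : 0 < p := by linarith
  have hmeas i : Measurable fun ω => φ (U i ω, g i ω) :=
    hφ.comp ((h.measurable_weight i).prodMk (h.measurable_vector i))
  have hdom i : Integrable (fun ω => A * (1 + U i ω ^ p)) μ :=
    ((integrable_const 1).fun_add (hint i)).const_mul A
  have hnorm i : Integrable (fun ω => ‖φ (U i ω, g i ω)‖ ^ p) μ :=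
    (hdom i).mono' ((hmeas i).norm.pow_const p).aestronglyMeasurable (ae_of_all _ fun ω => by
      rw [Real.norm_of_nonneg (by positivity)]
      exact hφA i ω)
  have hLp i : MemLp (fun ω => φ (U i ω, g i ω)) (ENNReal.ofReal p) μ :=
    (memLp_ofReal_iff_integrable_norm_rpow (hmeas i).aestronglyMeasurable hp0).2 (hnorm i)
  have hmean : MemLp (fun ω => sampleMean fun i => φ (U i ω, g i ω)) (ENNReal.ofReal p) μ :=
    (memLp_finsetSum _ fun i _ => hLp i).const_smul _
  refine ⟨(memLp_ofReal_iff_integrable_norm_rpow hmean.1 hp0).1 hmean,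
    integral_norm_sampleMean_rpow_le hp (h.indep.comp (fun _ => φ) fun _ => hφ) hmeas hLp hφ0
      fun i => ?_⟩
  calc _ ≤ ∫ ω, A * (1 + U i ω ^ p) ∂μ := integral_mono (hnorm i) (hdom i) (hφA i)
    _ = A * (1 + ∫ ω, U i ω ^ p ∂μ) := by
      rw [integral_const_mul, integral_add (integrable_const 1) (hint i)]
      simp
    _ ≤ A * (1 + B) := by gcongr; exact hB i

lemma sampleMean_one_sub_weight_moment [IsProbabilityMeasure μ] [Fintype ι] [Nonempty ι]
    (h : IsWeightedSample μ U g G C) (hp : 2 ≤ p)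
    (hint : ∀ i, Integrable (fun ω => U i ω ^ p) μ) (hB : ∀ i, ∫ ω, U i ω ^ p ∂μ ≤ B) :
    Integrable (fun ω => ‖sampleMean fun i => 1 - U i ω‖ ^ p) μ ∧
      ∫ ω, ‖sampleMean fun i => 1 - U i ω‖ ^ p ∂μ ≤
        marcinkiewiczZygmundConst p * (Fintype.card ι : ℝ) ^ (-(p / 2)) * (1 * (1 + B)) := by
  refine h.sampleMean_comp_moment hp hint hB (φ := fun x => 1 - x.1) (by fun_prop) zero_le_one
    (fun i ω => ?_) h.integral_one_sub_weight
  have hU := h.weight_pos i ω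
  have hUp : 0 ≤ U i ω ^ p := by positivity
  rw [one_mul, Real.norm_eq_abs]
  rcases le_total 1 (U i ω) with h1 | h1
  · calc |1 - U i ω| ^ p ≤ U i ω ^ p := by
          gcongr
          rw [abs_le]
          constructor <;> linarith
      _ ≤ 1 + U i ω ^ p := by linarith
  · refine (Real.rpow_le_one (abs_nonneg _) ?_ (by linarith)).trans (by linarith)
    rw [abs_le]
    constructor <;> linarith

end IsWeightedSample

/-- The constant in the bound of order `n ^ (-p / 2)` on the `q`-th moment of the linearization
error of a weighted sample of size `n` with `p`-th weight moments, when `‖g‖ ≤ C u`. -/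
def linearizationConst (C p q : ℝ) : ℝ :=
  (2 * (1 + 2 * C)) ^ q * (marcinkiewiczZygmundConst p * ((2 * C) ^ p + 1))

lemma linearizationConst_nonneg {C : ℝ} (hC : 0 ≤ C) (p q : ℝ) : 0 ≤ linearizationConst C p q := by
  have := marcinkiewiczZygmundConst_nonneg p
  unfold linearizationConst
  positivity

namespace IsWeightedSample

variable {H : Type*} [NormedAddCommGroup H] [InnerProductSpace ℝ H] [CompleteSpace H]
  [MeasurableSpace H] [BorelSpace H] [SecondCountableTopology H] [IsProbabilityMeasure μ]
  {U : ι → Ω → ℝ} {g : ι → Ω → H} {G : H} {C p q B : ℝ}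

lemma sampleMean_residual_moment [Fintype ι] [Nonempty ι]
    (h : IsWeightedSample μ U g G C) (hp : 2 ≤ p)
    (hint : ∀ i, Integrable (fun ω => U i ω ^ p) μ) (hB : ∀ i, ∫ ω, U i ω ^ p ∂μ ≤ B) :
    Integrable (fun ω => ‖sampleMean fun i => g i ω - U i ω • G‖ ^ p) μ ∧
      ∫ ω, ‖sampleMean fun i => g i ω - U i ω • G‖ ^ p ∂μ ≤
        marcinkiewiczZygmundConst p * (Fintype.card ι : ℝ) ^ (-(p / 2)) *
          ((2 * C) ^ p * (1 + B)) := by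
  have hC : 0 ≤ C := (norm_nonneg G).trans h.norm_mean_le
  refine h.sampleMean_comp_moment hp hint hB (φ := fun x => x.2 - x.1 • G)
    (measurable_snd.sub (measurable_fst.smul_const G)) (by positivity) (fun i ω => ?_)
    h.integral_residual
  have hU := (h.weight_pos i ω).le
  calc ‖g i ω - U i ω • G‖ ^ p ≤ (2 * C * U i ω) ^ p := by
        gcongr
        exact h.norm_residual_le i ω
    _ = (2 * C) ^ p * U i ω ^ p := Real.mul_rpow (by positivity) hU
    _ ≤ (2 * C) ^ p * (1 + U i ω ^ p) := by
        gcongr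
        linarith

lemma linearizationError_moment [Fintype ι] [Nonempty ι] (h : IsWeightedSample μ U g G C)
    (hp : 2 ≤ p) (hq : 0 < q) (hqp : q ≤ p) (hpq : p ≤ 2 * q)
    (hint : ∀ i, Integrable (fun ω => U i ω ^ p) μ) (hB : ∀ i, ∫ ω, U i ω ^ p ∂μ ≤ B) :
    Integrable (fun ω => ‖linearizationError (U · ω) (g · ω) G‖ ^ q) μ ∧
      ∫ ω, ‖linearizationError (U · ω) (g · ω) G‖ ^ q ∂μ ≤
        linearizationConst C p q * (Fintype.card ι : ℝ) ^ (-(p / 2)) * (1 + B) := by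
  have hC : 0 ≤ C := (norm_nonneg G).trans h.norm_mean_le
  obtain ⟨int_residual, residual_le⟩ := h.sampleMean_residual_moment hp hint hB
  obtain ⟨int_weight, weight_le⟩ := h.sampleMean_one_sub_weight_moment hp hint hB
  have pointwise ω := norm_linearizationError_rpow_le (fun i => h.weight_pos i ω)
    (fun i => h.norm_le i ω) h.norm_mean_le hq hqp hpq
  have dominating := (int_residual.fun_add int_weight).const_mul ((2 * (1 + 2 * C)) ^ q)
  have hmeas : Measurable fun ω => ‖linearizationError (U · ω) (g · ω) G‖ ^ q :=
    h.measurable_linearizationError.norm.pow_const q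
  have int_error := dominating.mono' hmeas.aestronglyMeasurable (ae_of_all _ fun ω => by
    rw [Real.norm_of_nonneg (by positivity)]
    exact pointwise ω)
  refine ⟨int_error, ?_⟩
  calc _ ≤ _ := integral_mono int_error dominating pointwise
    _ = (2 * (1 + 2 * C)) ^ q * (∫ ω, ‖sampleMean fun i => g i ω - U i ω • G‖ ^ p ∂μ +
          ∫ ω, ‖sampleMean fun i => 1 - U i ω‖ ^ p ∂μ) := by
        rw [integral_const_mul, integral_add int_residual int_weight]
    _ ≤ (2 * (1 + 2 * C)) ^ q *
          (marcinkiewiczZygmundConst p * (Fintype.card ι : ℝ) ^ (-(p / 2)) *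
              ((2 * C) ^ p * (1 + B)) +
            marcinkiewiczZygmundConst p * (Fintype.card ι : ℝ) ^ (-(p / 2)) * (1 * (1 + B))) := by
        gcongr
    _ = _ := by
        unfold linearizationConst
        ring

lemma norm_integral_selfNormalizedMean_sub_le [Fintype ι] [Nonempty ι]
    (h : IsWeightedSample μ U g G C) (hint : ∀ i, Integrable (fun ω => U i ω ^ (2 : ℝ)) μ)
    (hB : ∀ i, ∫ ω, U i ω ^ (2 : ℝ) ∂μ ≤ B) :
    ‖∫ ω, selfNormalizedMean (U · ω) (g · ω) ∂μ - G‖ ≤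
      linearizationConst C 2 1 * (Fintype.card ι : ℝ)⁻¹ * (1 + B) := by
  obtain ⟨int_error, error_le⟩ :=
    h.linearizationError_moment le_rfl one_pos one_le_two (mul_one 2).ge hint hB
  simp only [Real.rpow_one] at int_error error_le
  have int_residual i : Integrable (fun ω => g i ω - U i ω • G) μ :=
    (h.integrable_vector i).sub ((h.integrable_weight i).smul_const G)
  have int_linear : Integrable (fun ω => sampleMean fun i => g i ω - U i ω • G) μ :=
    (integrable_finsetSum _ fun i _ => int_residual i).smul _
  have linear_zero : ∫ ω, sampleMean (fun i => g i ω - U i ω • G) ∂μ = 0 := by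
    simp only [sampleMean]
    rw [integral_smul, integral_finsetSum _ fun i _ => int_residual i]
    simp only [h.integral_residual, sum_const_zero, smul_zero]
  have int_error : Integrable (fun ω => linearizationError (U · ω) (g · ω) G) μ :=
    (integrable_norm_iff h.measurable_linearizationError.aestronglyMeasurable).1 int_error
  have expansion : ∫ ω, selfNormalizedMean (U · ω) (g · ω) ∂μ =
      G + ∫ ω, linearizationError (U · ω) (g · ω) G ∂μ := by
    have pointwise ω : selfNormalizedMean (U · ω) (g · ω) =
        G + sampleMean (fun i => g i ω - U i ω • G) + linearizationError (U · ω) (g · ω) G := by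
      unfold linearizationError
      abel
    simp only [pointwise]
    rw [integral_add ((integrable_const G).fun_add int_linear) int_error,
      integral_add (integrable_const G) int_linear, linear_zero]
    simp
  rw [expansion, add_sub_cancel_left]
  refine (norm_integral_le_integral_norm _).trans (error_le.trans_eq ?_)
  rw [div_self two_ne_zero, Real.rpow_neg_one]

lemma integral_norm_coupledCorrection_sq_le {n : ℕ} [NeZero n] {U : Fin (2 * n) → Ω → ℝ}
    {g : Fin (2 * n) → Ω → H} (h : IsWeightedSample μ U g G C) (hp : 2 ≤ p) (hp4 : p ≤ 4)
    (hint : ∀ i, Integrable (fun ω => U i ω ^ p) μ) (hB : ∀ i, ∫ ω, U i ω ^ p ∂μ ≤ B) :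
    ∫ ω, ‖coupledCorrection (U · ω) (g · ω)‖ ^ 2 ∂μ ≤
      4 * linearizationConst C p 2 * (n : ℝ) ^ (-(p / 2)) * (1 + B) := by
  have hn : (0 : ℝ) < n := Nat.cast_pos.2 (NeZero.pos n)
  have hC : 0 ≤ C := (norm_nonneg G).trans h.norm_mean_le
  have hB0 : 0 ≤ B := (integral_nonneg fun ω => by
    have := h.weight_pos 0 ω
    positivity).trans (hB 0)
  have hconst := linearizationConst_nonneg hC p 2
  have moment {m : ℕ} [NeZero m] {σ : Fin m → Fin (2 * n)} (hσ : Function.Injective σ) :=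
    (h.precomp hσ).linearizationError_moment (q := 2) hp two_pos hp (by linarith)
      (fun k => hint (σ k)) fun k => hB (σ k)
  simp only [Real.rpow_two, Fintype.card_fin] at moment
  obtain ⟨int_full, full_le⟩ := moment Function.injective_id
  obtain ⟨int_first, first_le⟩ := moment (firstHalf_injective n)
  obtain ⟨int_second, second_le⟩ := moment (secondHalf_injective n)
  have full_rate : ((2 * n : ℕ) : ℝ) ^ (-(p / 2)) ≤ (n : ℝ) ^ (-(p / 2)) := by
    refine Real.rpow_le_rpow_of_nonpos hn ?_ (by linarith)
    push_cast
    linarith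
  simp only [coupledCorrection_eq_linearizationError _ _ G, mul_assoc (4 : ℝ)]
  refine integral_norm_sub_half_smul_add_sq_le int_full int_first int_second (full_le.trans ?_)
    first_le second_le
  gcongr

end IsWeightedSample

end WeightedSample
section HierarchicalModel

lemma integral_norm_sub_integral_sq_le {Ω H : Type*} [MeasurableSpace Ω] {μ : Measure Ω}
    [IsProbabilityMeasure μ] [NormedAddCommGroup H] [InnerProductSpace ℝ H] [CompleteSpace H]
    {X : Ω → H} (hX : MemLp X 2 μ) :
    ∫ ω, ‖X ω - ∫ ω', X ω' ∂μ‖ ^ 2 ∂μ ≤ ∫ ω, ‖X ω‖ ^ 2 ∂μ := by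
  set m := ∫ ω, X ω ∂μ
  have int_X : Integrable X μ := hX.integrable one_le_two
  have int_sq : Integrable (fun ω => ‖X ω‖ ^ 2) μ := hX.integrable_norm_pow two_ne_zero
  have int_inner : Integrable (fun ω => inner ℝ (X ω) m) μ := int_X.inner_const m
  calc _ = ∫ ω, (‖X ω‖ ^ 2 - 2 * inner ℝ (X ω) m + ‖m‖ ^ 2) ∂μ := by simp only [norm_sub_sq_real]
    _ = ∫ ω, ‖X ω‖ ^ 2 ∂μ - ‖m‖ ^ 2 := by
      have int_diff : Integrable (fun ω => ‖X ω‖ ^ 2 - 2 * inner ℝ (X ω) m) μ :=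
        int_sq.sub (int_inner.const_mul 2)
      rw [integral_add int_diff (integrable_const _), integral_sub int_sq (int_inner.const_mul 2),
        integral_const_mul, integral_const]
      simp only [real_inner_comm m, integral_inner int_X, probReal_univ, one_smul]
      rw [real_inner_self_eq_norm_sq]
      ring
    _ ≤ ∫ ω, ‖X ω‖ ^ 2 ∂μ := sub_le_self _ (sq_nonneg _)

variable {P 𝒵 : Type*} [MeasurableSpace P] [MeasurableSpace 𝒵]

/-- A parameter drawn from `π` and, given the parameter `x`, samples drawn from `κ x`, together with
a positive weight `u x` of conditional mean `1` and a vector `g x` of conditional mean `G x` that is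
bounded by `C` times the weight. -/
structure IsWeightedModel {E : Type*} [NormedAddCommGroup E] [NormedSpace ℝ E] [MeasurableSpace E]
    (π : Measure P) (κ : Kernel P 𝒵) (u : P → 𝒵 → ℝ) (g : P → 𝒵 → E) (G : P → E) (C : ℝ) :
    Prop where
  measurable_weight : Measurable (Function.uncurry u)
  measurable_vector : Measurable (Function.uncurry g)
  weight_pos : ∀ x z, 0 < u x z
  norm_le : ∀ x z, ‖g x z‖ ≤ C * u x z
  integral_weight : ∀ᵐ x ∂π, ∫ z, u x z ∂κ x = 1
  integral_vector : ∀ᵐ x ∂π, ∫ z, g x z ∂κ x = G x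

namespace IsWeightedModel

variable {ι : Type*} {π : Measure P} {κ : Kernel P 𝒵} {E : Type*} [NormedAddCommGroup E]
  [NormedSpace ℝ E] [MeasurableSpace E] {u : P → 𝒵 → ℝ} {g : P → 𝒵 → E} {G : P → E} {C : ℝ}

lemma bound_nonneg [IsProbabilityMeasure π] [IsMarkovKernel κ]
    (h : IsWeightedModel π κ u g G C) : 0 ≤ C := by
  obtain ⟨x⟩ := nonempty_of_isProbabilityMeasure π
  obtain ⟨z⟩ := nonempty_of_isProbabilityMeasure (κ x)
  exact nonneg_of_mul_nonneg_left ((norm_nonneg _).trans (h.norm_le x z)) (h.weight_pos x z)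

variable [BorelSpace E] [SecondCountableTopology E]

lemma measurable_selfNormalizedMean {ι' : Type*} [Fintype ι'] (h : IsWeightedModel π κ u g G C)
    (σ : ι' → ι) :
    Measurable fun w : P × (ι → 𝒵) =>
      selfNormalizedMean (fun k => u w.1 (w.2 (σ k))) (fun k => g w.1 (w.2 (σ k))) := by
  have coordinate k : Measurable fun w : P × (ι → 𝒵) => (w.1, w.2 (σ k)) := by fun_prop
  exact (Finset.measurable_sum _ fun k _ => h.measurable_weight.comp (coordinate k)).inv.smul
    (Finset.measurable_sum _ fun k _ => h.measurable_vector.comp (coordinate k))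

lemma measurable_coupledCorrection {n : ℕ} (h : IsWeightedModel π κ u g G C) :
    Measurable fun w : P × (Fin (2 * n) → 𝒵) =>
      coupledCorrection (fun k => u w.1 (w.2 k)) (fun k => g w.1 (w.2 k)) :=
  (h.measurable_selfNormalizedMean id).sub (((h.measurable_selfNormalizedMean (firstHalf n)).add
    (h.measurable_selfNormalizedMean (secondHalf n))).const_smul (2 : ℝ)⁻¹)

end IsWeightedModel

/-- The kernel sampling independently, for each index in `ι`, from the Markov kernel `κ`. -/
def iidKernel (κ : Kernel P 𝒵) [IsMarkovKernel κ] (ι : Type*) [Fintype ι] :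
    Kernel P (ι → 𝒵) where
  toFun x := Measure.pi fun _ => κ x
  measurable' := by
    refine Measurable.measure_of_isPiSystem_of_isProbabilityMeasure generateFrom_pi.symm
      isPiSystem_pi ?_
    rintro _ ⟨t, ht, rfl⟩
    simp only [Measure.pi_pi]
    exact Finset.measurable_prod _ fun i _ => κ.measurable_coe (ht i (Set.mem_univ i))

variable (κ : Kernel P 𝒵) [IsMarkovKernel κ] (ι : Type*) [Fintype ι]

instance : IsMarkovKernel (iidKernel κ ι) :=
  ⟨fun x => inferInstanceAs (IsProbabilityMeasure (Measure.pi fun _ : ι => κ x))⟩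

variable {κ} {ι}

lemma integrable_iidKernel_eval {F : Type*} [NormedAddCommGroup F] {f : 𝒵 → F} {x : P} {i : ι}
    (hf : Integrable f (κ x)) : Integrable (fun zs => f (zs i)) (iidKernel κ ι x) :=
  integrable_comp_eval (μ := fun _ => κ x) hf

lemma integral_iidKernel_eval {F : Type*} [NormedAddCommGroup F] [NormedSpace ℝ F] {f : 𝒵 → F}
    {x : P} {i : ι} (hf : AEStronglyMeasurable f (κ x)) :
    ∫ zs, f (zs i) ∂iidKernel κ ι x = ∫ z, f z ∂κ x :=
  integral_comp_eval (μ := fun _ => κ x) hf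

variable {π : Measure P}

lemma integrable_integral_kernel [SFinite π] {F : Type*} [NormedAddCommGroup F] [NormedSpace ℝ F]
    {f : P × 𝒵 → F} (hf : Integrable f (π ⊗ₘ κ)) : Integrable (fun x => ∫ z, f (x, z) ∂κ x) π :=
  Integrable.integral_compProd (κ := Kernel.const Unit π) (η := Kernel.prodMkLeft Unit κ)
    (a := ()) hf

lemma norm_integral_le_of_norm_le_integral_kernel [IsProbabilityMeasure π] {F : Type*}
    [NormedAddCommGroup F] [NormedSpace ℝ F] {m : P × 𝒵 → ℝ} {f : P → F} {K c : ℝ}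
    (hm : Integrable m (π ⊗ₘ κ))
    (hf : ∀ᵐ x ∂π, ‖f x‖ ≤ K * (c + ∫ z, m (x, z) ∂κ x)) :
    ‖∫ x, f x ∂π‖ ≤ K * (c + ∫ w, m w ∂(π ⊗ₘ κ)) := by
  have int_moment := integrable_integral_kernel hm
  refine (norm_integral_le_of_norm_le
    (((integrable_const c).fun_add int_moment).const_mul K) hf).trans_eq ?_
  rw [integral_const_mul, integral_add (integrable_const c) int_moment,
    Measure.integral_compProd hm]
  simp

namespace IsWeightedModel

variable {E : Type*} [NormedAddCommGroup E] [NormedSpace ℝ E]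
  [MeasurableSpace E] {u : P → 𝒵 → ℝ} {g : P → 𝒵 → E} {G : P → E} {C p s : ℝ}

lemma integrable_weight_rpow_of_le (h : IsWeightedModel π κ u g G C) (hp : 0 ≤ p) (hps : p ≤ s)
    {x : P} (hs : Integrable (fun z => u x z ^ s) (κ x)) :
    Integrable (fun z => u x z ^ p) (κ x) ∧
      ∫ z, u x z ^ p ∂κ x ≤ 1 + ∫ z, u x z ^ s ∂κ x := by
  have dominated z : u x z ^ p ≤ 1 + u x z ^ s := by
    have hu := h.weight_pos x z
    rcases le_total 1 (u x z) with h1 | h1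
    · linarith [Real.rpow_le_rpow_of_exponent_le h1 hps]
    · exact (Real.rpow_le_one hu.le h1 hp).trans (le_add_of_nonneg_right (by positivity))
  have int_dominating := (integrable_const (1 : ℝ)).fun_add hs
  have int_rpow : Integrable (fun z => u x z ^ p) (κ x) :=
    int_dominating.mono' ((h.measurable_weight.of_uncurry_left.pow_const p).aestronglyMeasurable)
      (ae_of_all _ fun z => by
        rw [Real.norm_of_nonneg (Real.rpow_nonneg (h.weight_pos x z).le p)]
        exact dominated z)
  refine ⟨int_rpow, (integral_mono int_rpow int_dominating dominated).trans_eq ?_⟩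
  rw [integral_add (integrable_const 1) hs]
  simp

variable [BorelSpace E] [SecondCountableTopology E]

lemma ae_isWeightedSample (h : IsWeightedModel π κ u g G C) :
    ∀ᵐ x ∂π, IsWeightedSample (iidKernel κ ι x) (fun i zs => u x (zs i)) (fun i zs => g x (zs i))
      (G x) C := by
  filter_upwards [h.integral_weight, h.integral_vector] with x hx1 hxG
  exact isWeightedSample_pi h.measurable_weight.of_uncurry_left
    h.measurable_vector.of_uncurry_left (h.weight_pos x) (h.norm_le x) hx1 hxG

lemma integrable_mean [IsFiniteMeasure π] (h : IsWeightedModel π κ u g G C) : Integrable G π := by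
  have hmeas : StronglyMeasurable fun x => ∫ z, g x z ∂κ x :=
    h.measurable_vector.stronglyMeasurable.integral_kernel_prod_right
  refine .of_bound (hmeas.aestronglyMeasurable.congr h.integral_vector) C ?_
  filter_upwards [h.ae_isWeightedSample (ι := Unit)] with x hx using hx.norm_mean_le

variable [IsProbabilityMeasure π]

lemma integrable_selfNormalizedMean (h : IsWeightedModel π κ u g G C) :
    Integrable (fun w : P × (ι → 𝒵) => selfNormalizedMean (u w.1 <| w.2 ·) (g w.1 <| w.2 ·))
      (π ⊗ₘ iidKernel κ ι) :=
  .of_bound (h.measurable_selfNormalizedMean id).aestronglyMeasurable C <| ae_of_all _ fun w =>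
    norm_selfNormalizedMean_le h.bound_nonneg (fun i => (h.weight_pos w.1 (w.2 i)).le) fun i =>
      h.norm_le w.1 (w.2 i)

lemma memLp_coupledCorrection {n : ℕ} (h : IsWeightedModel π κ u g G C) :
    MemLp (fun w : P × (Fin (2 * n) → 𝒵) => coupledCorrection (u w.1 <| w.2 ·) (g w.1 <| w.2 ·)) 2
      (π ⊗ₘ iidKernel κ (Fin (2 * n))) :=
  .of_bound h.measurable_coupledCorrection.aestronglyMeasurable (2 * C) <| ae_of_all _ fun w =>
    norm_coupledCorrection_le h.bound_nonneg (fun i => (h.weight_pos w.1 (w.2 i)).le) fun i =>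
      h.norm_le w.1 (w.2 i)

end IsWeightedModel

namespace IsWeightedModel

variable [IsProbabilityMeasure π] {H : Type*} [NormedAddCommGroup H]
  [InnerProductSpace ℝ H] [CompleteSpace H] [MeasurableSpace H] [BorelSpace H]
  [SecondCountableTopology H] {u : P → 𝒵 → ℝ} {g : P → 𝒵 → H} {G : P → H} {C p s : ℝ}

theorem norm_integral_selfNormalizedMean_sub_le [Nonempty ι] (h : IsWeightedModel π κ u g G C)
    (hs : 2 ≤ s) (hus : Integrable (fun w => u w.1 w.2 ^ s) (π ⊗ₘ κ)) :
    ‖∫ w, selfNormalizedMean (u w.1 <| w.2 ·) (g w.1 <| w.2 ·) ∂(π ⊗ₘ iidKernel κ ι) -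
        ∫ x, G x ∂π‖ ≤
      linearizationConst C 2 1 * (Fintype.card ι : ℝ)⁻¹ *
        (2 + ∫ w, u w.1 w.2 ^ s ∂(π ⊗ₘ κ)) := by
  have int_mean := h.integrable_selfNormalizedMean (ι := ι)
  rw [Measure.integral_compProd int_mean, ← integral_sub (integrable_integral_kernel int_mean)
    h.integrable_mean]
  refine norm_integral_le_of_norm_le_integral_kernel hus ?_
  filter_upwards [h.ae_isWeightedSample (ι := ι),
    ((Measure.integrable_compProd_iff hus.1).1 hus).1] with x hx hxs
  obtain ⟨int_sq, sq_le⟩ := h.integrable_weight_rpow_of_le zero_le_two hs hxs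
  refine (hx.norm_integral_selfNormalizedMean_sub_le (fun i => integrable_iidKernel_eval int_sq)
    fun i => (integral_iidKernel_eval int_sq.1).trans_le sq_le).trans_eq ?_
  rw [← add_assoc, one_add_one_eq_two]

theorem integral_norm_coupledCorrection_sq_le {n : ℕ} [NeZero n] (h : IsWeightedModel π κ u g G C)
    (hp : 2 ≤ p) (hp4 : p ≤ 4) (hps : p ≤ s)
    (hus : Integrable (fun w => u w.1 w.2 ^ s) (π ⊗ₘ κ)) :
    ∫ w, ‖coupledCorrection (u w.1 <| w.2 ·) (g w.1 <| w.2 ·)‖ ^ 2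
        ∂(π ⊗ₘ iidKernel κ (Fin (2 * n))) ≤
      4 * linearizationConst C p 2 * (n : ℝ) ^ (-(p / 2)) *
        (2 + ∫ w, u w.1 w.2 ^ s ∂(π ⊗ₘ κ)) := by
  rw [Measure.integral_compProd (h.memLp_coupledCorrection.integrable_norm_pow two_ne_zero)]
  refine (Real.le_norm_self _).trans (norm_integral_le_of_norm_le_integral_kernel hus ?_)
  filter_upwards [h.ae_isWeightedSample (ι := Fin (2 * n)),
    ((Measure.integrable_compProd_iff hus.1).1 hus).1] with x hx hxs
  obtain ⟨int_rpow, rpow_le⟩ := h.integrable_weight_rpow_of_le (by linarith) hps hxs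
  rw [Real.norm_of_nonneg (by positivity)]
  refine (hx.integral_norm_coupledCorrection_sq_le hp hp4
    (fun i => integrable_iidKernel_eval int_rpow)
    fun i => (integral_iidKernel_eval int_rpow.1).trans_le rpow_le).trans_eq ?_
  rw [← add_assoc, one_add_one_eq_two]

end IsWeightedModel

end HierarchicalModel
section MultilevelRates

lemma norm_le_card_mul_of_norm_apply_le {ι 𝕜 : Type*} [Fintype ι] [RCLike 𝕜]
    {x : EuclideanSpace 𝕜 ι} {b : ℝ} (h : ∀ i, ‖x i‖ ≤ b) : ‖x‖ ≤ Fintype.card ι * b :=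
  calc ‖x‖ = ‖∑ i, x i • EuclideanSpace.basisFun ι 𝕜 i‖ :=
        congrArg norm ((EuclideanSpace.basisFun ι 𝕜).sum_repr x).symm
    _ ≤ ∑ _i : ι, b := by
        refine norm_sum_le_of_le _ fun i _ => ?_
        rw [norm_smul, OrthonormalBasis.norm_eq_one, mul_one]
        exact h i
    _ = Fintype.card ι * b := by simp

lemma two_pow_pred_rpow_neg_le {a : ℝ} (ha : a ≤ 2) {ℓ : ℕ} (hℓ : 1 ≤ ℓ) :
    ((2 ^ (ℓ - 1) : ℕ) : ℝ) ^ (-a) ≤ 4 * (2 : ℝ) ^ (-a * ℓ) := by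
  have pow_eq : ((2 ^ (ℓ - 1) : ℕ) : ℝ) = (2 : ℝ) ^ ((ℓ : ℝ) - 1) := by
    rw [Nat.cast_pow, ← Real.rpow_natCast, Nat.cast_sub hℓ, Nat.cast_ofNat, Nat.cast_one]
  calc ((2 ^ (ℓ - 1) : ℕ) : ℝ) ^ (-a) = 2 ^ a * (2 : ℝ) ^ (-a * ℓ) := by
        rw [pow_eq, ← Real.rpow_mul zero_le_two, ← Real.rpow_add two_pos]
        ring_nf
    _ ≤ 2 ^ (2 : ℝ) * (2 : ℝ) ^ (-a * ℓ) := by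
        gcongr
        exact one_le_two
    _ = 4 * (2 : ℝ) ^ (-a * ℓ) := by norm_num

variable {Θ 𝒳 𝒵 E : Type*} [MeasurableSpace Θ] [MeasurableSpace 𝒳] [MeasurableSpace 𝒵]
  [NormedAddCommGroup E] [NormedSpace ℝ E] {r : Measure Θ} {ν : Measure 𝒳} {q : Kernel 𝒳 𝒵}

lemma integrable_compProd_of_lintegral_lt_top [SFinite r] [SFinite ν] [IsSFiniteKernel q]
    {f : Θ → 𝒳 → 𝒵 → ℝ} (hf : Measurable fun p : Θ × 𝒳 × 𝒵 => f p.1 p.2.1 p.2.2)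
    (hf0 : ∀ θ x z, 0 ≤ f θ x z)
    (hfin : ∫⁻ θ, ∫⁻ x, ∫⁻ z, ENNReal.ofReal (f θ x z) ∂(q x) ∂ν ∂r < ⊤) :
    Integrable (fun w => f w.1.1 w.1.2 w.2) ((r.prod ν) ⊗ₘ Kernel.prodMkLeft Θ q) := by
  have assoc : Measurable fun w : (Θ × 𝒳) × 𝒵 => (w.1.1, w.1.2, w.2) := by fun_prop
  have hmeas : Measurable fun w : (Θ × 𝒳) × 𝒵 => f w.1.1 w.1.2 w.2 := hf.comp assoc
  refine ⟨hmeas.aestronglyMeasurable, ?_⟩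
  rw [hasFiniteIntegral_iff_ofReal (ae_of_all _ fun w => hf0 _ _ _),
    Measure.lintegral_compProd hmeas.ennreal_ofReal,
    lintegral_prod _ (hmeas.ennreal_ofReal.lintegral_kernel_prod_right'
      (κ := Kernel.prodMkLeft Θ q)).aemeasurable]
  exact hfin

variable [IsMarkovKernel q]

lemma jointExp3_eq_integral_compProd [SFinite r] [SFinite ν] {n : ℕ} {f : Θ → 𝒳 → (Fin n → 𝒵) → E}
    (hf : Integrable (fun w => f w.1.1 w.1.2 w.2)
      ((r.prod ν) ⊗ₘ iidKernel (Kernel.prodMkLeft Θ q) (Fin n))) :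
    jointExp3 r ν q n f =
      ∫ w, f w.1.1 w.1.2 w.2 ∂((r.prod ν) ⊗ₘ iidKernel (Kernel.prodMkLeft Θ q) (Fin n)) := by
  rw [Measure.integral_compProd hf, integral_prod _ (integrable_integral_kernel hf)]
  rfl

namespace IsWeightedModel

variable [IsProbabilityMeasure r] [IsProbabilityMeasure ν] {H : Type*} [NormedAddCommGroup H]
  [InnerProductSpace ℝ H] [CompleteSpace H] [MeasurableSpace H] [BorelSpace H]
  [SecondCountableTopology H] {u : Θ → 𝒳 → 𝒵 → ℝ} {g : Θ → 𝒳 → 𝒵 → H} {G : Θ → 𝒳 → H} {C p s : ℝ}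

theorem norm_jointExp3_ratioEstimator3_sub_le {n : ℕ} [NeZero n]
    (h : IsWeightedModel (r.prod ν) (Kernel.prodMkLeft Θ q) (fun y => u y.1 y.2)
      (fun y => g y.1 y.2) (fun y => G y.1 y.2) C) (hs : 2 ≤ s)
    (hus : Integrable (fun w => u w.1.1 w.1.2 w.2 ^ s) ((r.prod ν) ⊗ₘ Kernel.prodMkLeft Θ q)) :
    ‖jointExp3 r ν q n (ratioEstimator3 u g) - ∫ y : Θ × 𝒳, G y.1 y.2 ∂(r.prod ν)‖ ≤
      linearizationConst C 2 1 * (n : ℝ)⁻¹ *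
        (2 + ∫ w, u w.1.1 w.1.2 w.2 ^ s ∂((r.prod ν) ⊗ₘ Kernel.prodMkLeft Θ q)) := by
  rw [jointExp3_eq_integral_compProd (h.integrable_selfNormalizedMean (ι := Fin n))]
  exact (h.norm_integral_selfNormalizedMean_sub_le hs hus).trans_eq (by rw [Fintype.card_fin])

theorem jointExp3_norm_gradCorrection3_sub_sq_le {n : ℕ} [NeZero n]
    (h : IsWeightedModel (r.prod ν) (Kernel.prodMkLeft Θ q) (fun y => u y.1 y.2)
      (fun y => g y.1 y.2) (fun y => G y.1 y.2) C) (hp : 2 ≤ p) (hp4 : p ≤ 4) (hps : p ≤ s)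
    (hus : Integrable (fun w => u w.1.1 w.1.2 w.2 ^ s) ((r.prod ν) ⊗ₘ Kernel.prodMkLeft Θ q)) :
    jointExp3 r ν q (2 * n) (fun θ x zs =>
        ‖gradCorrection3 u g n θ x zs - jointExp3 r ν q (2 * n) (gradCorrection3 u g n)‖ ^ 2) ≤
      4 * linearizationConst C p 2 * (n : ℝ) ^ (-(p / 2)) *
        (2 + ∫ w, u w.1.1 w.1.2 w.2 ^ s ∂((r.prod ν) ⊗ₘ Kernel.prodMkLeft Θ q)) := by
  have memLp := h.memLp_coupledCorrection (n := n)
  rw [jointExp3_eq_integral_compProd ((memLp.sub (memLp_const _)).integrable_norm_pow two_ne_zero),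
    jointExp3_eq_integral_compProd (memLp.integrable one_le_two)]
  exact (integral_norm_sub_integral_sq_le memLp).trans
    (h.integral_norm_coupledCorrection_sq_le hp hp4 hps hus)

theorem jointExp3_norm_gradCorrection3_sub_sq_two_pow_le {ℓ : ℕ}
    (h : IsWeightedModel (r.prod ν) (Kernel.prodMkLeft Θ q) (fun y => u y.1 y.2)
      (fun y => g y.1 y.2) (fun y => G y.1 y.2) C) (hs : 2 ≤ s)
    (hus : Integrable (fun w => u w.1.1 w.1.2 w.2 ^ s) ((r.prod ν) ⊗ₘ Kernel.prodMkLeft Θ q))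
    (hℓ : 1 ≤ ℓ) :
    jointExp3 r ν q (2 * 2 ^ (ℓ - 1)) (fun θ x zs =>
        ‖gradCorrection3 u g (2 ^ (ℓ - 1)) θ x zs -
          jointExp3 r ν q (2 * 2 ^ (ℓ - 1)) (gradCorrection3 u g (2 ^ (ℓ - 1)))‖ ^ 2) ≤
      16 * linearizationConst C (min s 4) 2 *
        (2 + ∫ w, u w.1.1 w.1.2 w.2 ^ s ∂((r.prod ν) ⊗ₘ Kernel.prodMkLeft Θ q)) *
          2 ^ (-(min (s / 2) 2) * ℓ) := by
  set M := ∫ w, u w.1.1 w.1.2 w.2 ^ s ∂((r.prod ν) ⊗ₘ Kernel.prodMkLeft Θ q)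
  have hM : 0 ≤ M := integral_nonneg fun w => Real.rpow_nonneg (h.weight_pos w.1 w.2).le s
  have hconst := linearizationConst_nonneg h.bound_nonneg (min s 4) 2
  have exponent : min s 4 / 2 = min (s / 2) 2 := by
    rw [← min_div_div_right zero_le_two]
    norm_num
  calc _ ≤ 4 * linearizationConst C (min s 4) 2 *
          ((2 ^ (ℓ - 1) : ℕ) : ℝ) ^ (-(min s 4 / 2)) * (2 + M) :=
        h.jointExp3_norm_gradCorrection3_sub_sq_le (le_min hs (by norm_num)) (min_le_right _ _)
          (min_le_left _ _) hus
    _ ≤ 4 * linearizationConst C (min s 4) 2 * (4 * 2 ^ (-(min (s / 2) 2) * ℓ)) * (2 + M) := by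
        rw [exponent]
        gcongr
        exact two_pow_pred_rpow_neg_le (min_le_right _ _) hℓ
    _ = _ := by ring

theorem norm_jointExp3_ratioEstimator3_sub_two_pow_le {ℓ : ℕ}
    (h : IsWeightedModel (r.prod ν) (Kernel.prodMkLeft Θ q) (fun y => u y.1 y.2)
      (fun y => g y.1 y.2) (fun y => G y.1 y.2) C) (hs : 2 ≤ s)
    (hus : Integrable (fun w => u w.1.1 w.1.2 w.2 ^ s) ((r.prod ν) ⊗ₘ Kernel.prodMkLeft Θ q)) :
    ‖jointExp3 r ν q (2 ^ ℓ) (ratioEstimator3 u g) - ∫ y : Θ × 𝒳, G y.1 y.2 ∂(r.prod ν)‖ ≤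
      linearizationConst C 2 1 *
        (2 + ∫ w, u w.1.1 w.1.2 w.2 ^ s ∂((r.prod ν) ⊗ₘ Kernel.prodMkLeft Θ q)) *
          2 ^ (-(min (s / 2) 1) * ℓ) := by
  have rate : ((2 ^ ℓ : ℕ) : ℝ)⁻¹ = 2 ^ (-(min (s / 2) 1) * ℓ) := by
    rw [min_eq_right (by linarith), neg_one_mul, Real.rpow_neg zero_le_two, Real.rpow_natCast,
      Nat.cast_pow, Nat.cast_ofNat]
  refine (h.norm_jointExp3_ratioEstimator3_sub_le hs hus).trans_eq ?_
  rw [rate]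
  ring

end IsWeightedModel

end MultilevelRates

theorem lmelbo_gradient_mlmc_rates_general
    {Θ 𝒳 𝒵 E : Type*} [MeasurableSpace Θ] [MeasurableSpace 𝒳] [MeasurableSpace 𝒵]
    [NormedAddCommGroup E] [InnerProductSpace ℝ E] [CompleteSpace E] [MeasurableSpace E]
    [BorelSpace E] [SecondCountableTopology E]
    (r : Measure Θ) [IsProbabilityMeasure r] (ν : Measure 𝒳) [IsProbabilityMeasure ν]
    (q : Kernel 𝒳 𝒵) [IsMarkovKernel q] (u : Θ → 𝒳 → 𝒵 → ℝ)
    (hu_meas : Measurable fun p : Θ × 𝒳 × 𝒵 => u p.1 p.2.1 p.2.2) (hu_pos : ∀ θ x z, 0 < u θ x z)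
    (hu_norm : ∀ᵐ p ∂(r.prod ν), ∫ z, u p.1 p.2 z ∂(q p.2) = 1) (g : Θ → 𝒳 → 𝒵 → E)
    (hg_meas : Measurable fun p : Θ × 𝒳 × 𝒵 => g p.1 p.2.1 p.2.2) (G : Θ → 𝒳 → E)
    (hG : ∀ᵐ p ∂(r.prod ν), ∫ z, g p.1 p.2 z ∂(q p.2) = G p.1 p.2) (s : ℝ) (hs : 2 ≤ s)
    (hus : (∫⁻ θ, ∫⁻ x, ∫⁻ z, ENNReal.ofReal (u θ x z ^ s) ∂(q x) ∂ν ∂r) < ⊤)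
    (hbdd : ∃ C : ℝ, ∀ θ x z, ‖g θ x z‖ ≤ C * u θ x z) :
    ∃ c > (0 : ℝ),
      (∀ ℓ : ℕ, 1 ≤ ℓ →
        jointExp3 r ν q (2 * 2 ^ (ℓ - 1)) (fun θ x zs =>
            ‖gradCorrection3 u g (2 ^ (ℓ - 1)) θ x zs
                - jointExp3 r ν q (2 * 2 ^ (ℓ - 1)) (gradCorrection3 u g (2 ^ (ℓ - 1)))‖ ^ 2)
          ≤ c * (2 : ℝ) ^ (-(min (s / 2) 2) * ℓ)) ∧
      (∀ ℓ : ℕ,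
        ‖jointExp3 r ν q (2 ^ ℓ) (fun θ x zs => ratioEstimator3 u g θ x zs)
            - ∫ p : Θ × 𝒳, G p.1 p.2 ∂(r.prod ν)‖
          ≤ c * (2 : ℝ) ^ (-(min (s / 2) 1) * ℓ)) := by
  obtain ⟨C, hC⟩ := hbdd
  have assoc : Measurable fun w : (Θ × 𝒳) × 𝒵 => (w.1.1, w.1.2, w.2) := by fun_prop
  have model : IsWeightedModel (r.prod ν) (Kernel.prodMkLeft Θ q) (fun y => u y.1 y.2)
      (fun y => g y.1 y.2) (fun y => G y.1 y.2) C :=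
    ⟨hu_meas.comp assoc, hg_meas.comp assoc, fun _ => hu_pos _ _, fun _ => hC _ _, hu_norm, hG⟩
  have hC0 := model.bound_nonneg
  have moment := integrable_compProd_of_lintegral_lt_top (hu_meas.pow_const s)
    (fun θ x z => Real.rpow_nonneg (hu_pos θ x z).le s) hus
  set M := 2 + ∫ w, u w.1.1 w.1.2 w.2 ^ s ∂((r.prod ν) ⊗ₘ Kernel.prodMkLeft Θ q)
  have hM : 0 ≤ M := add_nonneg zero_le_two
    (integral_nonneg fun w => Real.rpow_nonneg (hu_pos _ _ _).le s)
  have variance_const := mul_nonneg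
    (mul_nonneg (by norm_num : (0 : ℝ) ≤ 16) (linearizationConst_nonneg hC0 (min s 4) 2)) hM
  have bias_const := mul_nonneg (linearizationConst_nonneg hC0 2 1) hM
  refine ⟨16 * linearizationConst C (min s 4) 2 * M + linearizationConst C 2 1 * M + 1,
    by positivity, fun ℓ hℓ => ?_, fun ℓ => ?_⟩
  · refine (model.jointExp3_norm_gradCorrection3_sub_sq_two_pow_le hs moment hℓ).trans ?_
    gcongr
    linarith
  · refine (model.norm_jointExp3_ratioEstimator3_sub_two_pow_le hs moment).trans ?_
    gcongr
    linarith

/-- **MLMC rates for the gradient of the locally marginalized evidence lower bound**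
(appendix Theorem of the paper).  Let `(Θ, X) ~ r ⊗ ν` and, conditionally on `(Θ, X)`,
`Z₁, Z₂, …` i.i.d. `~ q(·; X)`; let `u > 0` be the normalized weight
(`∫ u q(dz;x) = 1` a.e.) and `g` the weighted gradient with `∫ g q(dz;x) = G(θ,x)` a.e.
If `E[u^s] < ∞` for some `s ≥ 2` and `sup ‖g/u‖_∞ < ∞`, then there is `c > 0` such that
the coupled gradient corrections satisfy `E[‖∇Δ_ℓ − E[∇Δ_ℓ]‖₂²] ≤ c·2^{−βℓ}` for `ℓ ≥ 1`
with `β = min(s/2, 2)`, and the bias satisfies `‖E[Ĝ_{2^ℓ}] − E[G(Θ,X)]‖₂ ≤ c·2^{−αℓ}`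
for `ℓ ≥ 0` with `α = min(s/2, 1)`. -/
theorem lmelbo_gradient_mlmc_rates
    {Θ 𝒳 𝒵 : Type*} [MeasurableSpace Θ] [MeasurableSpace 𝒳] [MeasurableSpace 𝒵] {d : ℕ}
    (r : Measure Θ) [IsProbabilityMeasure r]
    (ν : Measure 𝒳) [IsProbabilityMeasure ν]
    (q : Kernel 𝒳 𝒵) [IsMarkovKernel q]
    (u : Θ → 𝒳 → 𝒵 → ℝ)
    (hu_meas : Measurable fun p : Θ × 𝒳 × 𝒵 => u p.1 p.2.1 p.2.2)
    (hu_pos : ∀ θ x z, 0 < u θ x z)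
    (hu_norm : ∀ᵐ p ∂(r.prod ν), ∫ z, u p.1 p.2 z ∂(q p.2) = 1)
    (g : Θ → 𝒳 → 𝒵 → EuclideanSpace ℝ (Fin d))
    (hg_meas : Measurable fun p : Θ × 𝒳 × 𝒵 => g p.1 p.2.1 p.2.2)
    (G : Θ → 𝒳 → EuclideanSpace ℝ (Fin d))
    (hG : ∀ᵐ p ∂(r.prod ν), ∫ z, g p.1 p.2 z ∂(q p.2) = G p.1 p.2)
    (s : ℝ) (hs : 2 ≤ s)
    (hus : (∫⁻ θ, ∫⁻ x, ∫⁻ z, ENNReal.ofReal (u θ x z ^ s) ∂(q x) ∂ν ∂r) < ⊤)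
    (hsup : ∃ Csup : ℝ, ∀ θ x z i, |g θ x z i / u θ x z| ≤ Csup) :
    ∃ c > (0 : ℝ),
      (∀ ℓ : ℕ, 1 ≤ ℓ →
        jointExp3 r ν q (2 * 2 ^ (ℓ - 1)) (fun θ x zs =>
            ‖gradCorrection3 u g (2 ^ (ℓ - 1)) θ x zs
                - jointExp3 r ν q (2 * 2 ^ (ℓ - 1)) (gradCorrection3 u g (2 ^ (ℓ - 1)))‖ ^ 2)
          ≤ c * (2 : ℝ) ^ (-(min (s / 2) 2) * ℓ)) ∧
      (∀ ℓ : ℕ,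
        ‖jointExp3 r ν q (2 ^ ℓ) (fun θ x zs => ratioEstimator3 u g θ x zs)
            - ∫ p : Θ × 𝒳, G p.1 p.2 ∂(r.prod ν)‖
          ≤ c * (2 : ℝ) ^ (-(min (s / 2) 1) * ℓ)) := by
  obtain ⟨C, hC⟩ := hsup
  refine lmelbo_gradient_mlmc_rates_general r ν q u hu_meas hu_pos hu_norm g hg_meas G hG s hs hus
    ⟨d * C, fun θ x z => ?_⟩
  have coordinate_le i : ‖g θ x z i‖ ≤ C * u θ x z := by
    rw [Real.norm_eq_abs, ← div_le_iff₀ (hu_pos θ x z), ← abs_of_pos (hu_pos θ x z), ← abs_div]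
    exact hC θ x z i
  simpa only [Fintype.card_fin, mul_assoc] using norm_le_card_mul_of_norm_apply_le coordinate_le
end
end
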